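/- arXiv:2402.04650 — 4 statements merged into one kernel-verified Lean document; each statement's English description precedes it below -/
import Mathlib

section
/- Let μ₁, μ₂ ∈ ℝ^d and let Σ₁, Σ₂ ∈ ℝ^{d×d} be symmetric positive definite. Then the squared 2-Wasserstein distance satisfies W₂²(N(μ₁, Σ₁), N(μ₂, Σ₂)) = ‖μ₂ − μ₁‖² + Tr( Σ₁ + Σ₂ − 2 (Σ₂^{1/2} Σ₁ Σ₂^{1/2})^{1/2} ), where A^{1/2} denotes the unique symmetric positive semidefinite square root of a symmetric positive semidefinite matrix A. -/
open MeasureTheory Real Set Matrix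
open scoped ENNReal

noncomputable section

/-- Density of the Gaussian measure `N(μ₀, Σ)` on `ℝ^d`. -/
def gaussDensityM (d : ℕ) (μ0 : EuclideanSpace ℝ (Fin d)) (S : Matrix (Fin d) (Fin d) ℝ)
    (x : EuclideanSpace ℝ (Fin d)) : ℝ :=
  (2 * π) ^ (-(d : ℝ) / 2) * S.det ^ (-(1 : ℝ) / 2) *
    Real.exp (-(1 / 2) * ∑ i, ∑ j, (x i - μ0 i) * S⁻¹ i j * (x j - μ0 j))

/-- The Gaussian measure `N(μ₀, Σ)` on `ℝ^d`. -/
def gaussMeasureM (d : ℕ) (μ0 : EuclideanSpace ℝ (Fin d)) (S : Matrix (Fin d) (Fin d) ℝ) :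
    Measure (EuclideanSpace ℝ (Fin d)) :=
  volume.withDensity fun x => ENNReal.ofReal (gaussDensityM d μ0 S x)

/-- The squared 2-Wasserstein distance: infimum of `∫ ‖x−y‖² dπ` over all couplings `π`
of `μ` and `ν`. -/
def W2sq (d : ℕ) (μ ν : Measure (EuclideanSpace ℝ (Fin d))) : ℝ≥0∞ :=
  ⨅ (c : Measure (EuclideanSpace ℝ (Fin d) × EuclideanSpace ℝ (Fin d)))
    (_ : c.map Prod.fst = μ) (_ : c.map Prod.snd = ν),
      ∫⁻ p, ENNReal.ofReal (‖p.1 - p.2‖ ^ 2) ∂c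

open ProbabilityTheory in
lemma aux_pi_gaussian (d : ℕ) :
    (Measure.pi (fun _ : Fin d => gaussianReal 0 1)) =
      volume.withDensity fun x => ENNReal.ofReal (∏ i, gaussianPDFReal 0 1 (x i)) := by
  refine Measure.pi_eq fun s hs => ?_
  rw [withDensity_apply _ (MeasurableSet.univ_pi hs)]
  rw [volume_pi, Measure.restrict_pi_pi]
  have hint : ∀ i, Integrable (fun x => gaussianPDFReal 0 1 x)
      ((volume : Measure ℝ).restrict (s i)) := fun i => (integrable_gaussianPDFReal 0 1).restrict
  rw [← ofReal_integral_eq_lintegral_ofReal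
    (Integrable.fintype_prod (f := fun _ x => gaussianPDFReal 0 1 x) hint)
    (ae_of_all _ fun x => Finset.prod_nonneg fun i _ => gaussianPDFReal_nonneg _ _ _)]
  rw [integral_fintype_prod_eq_prod (f := fun _ x => gaussianPDFReal 0 1 x)]
  rw [ENNReal.ofReal_prod_of_nonneg
    (fun i _ => integral_nonneg fun x => gaussianPDFReal_nonneg _ _ _)]
  exact Finset.prod_congr rfl fun i _ => (gaussianReal_apply_eq_integral 0 one_ne_zero _).symm

open ProbabilityTheory in
lemma aux_std (d : ℕ) :
    stdGaussian (EuclideanSpace ℝ (Fin d)) = gaussMeasureM d 0 1 := by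
  rw [← map_pi_eq_stdGaussian, aux_pi_gaussian, gaussMeasureM]
  have h := PiLp.volume_preserving_toLp (Fin d)
  ext s hs
  rw [Measure.map_apply h.measurable hs, withDensity_apply _ (h.measurable hs),
    withDensity_apply _ hs, ← h.setLIntegral_comp_preimage_emb
      (MeasurableEquiv.toLp 2 (Fin d → ℝ)).measurableEmbedding]
  congr 1
  ext x
  congr 1
  simp only [gaussDensityM, gaussianPDFReal_def, Finset.prod_mul_distrib, ← Real.exp_sum]
  simp only [Finset.prod_const, Finset.card_univ, Fintype.card_fin, Matrix.det_one, Real.one_rpow,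
    inv_one, NNReal.coe_one, mul_one, sub_zero, PiLp.zero_apply]
  congr 1
  · rw [← Real.rpow_natCast, ← Real.sqrt_inv, Real.sqrt_eq_rpow,
      ← Real.rpow_mul (by positivity), Real.inv_rpow (by positivity),
      ← Real.rpow_neg (by positivity)]
    congr 1
    ring
  · congr 1
    simp only [Matrix.one_apply, mul_ite, mul_one, mul_zero, ite_mul, zero_mul,
      Finset.sum_ite_eq, Finset.mem_univ, if_true]
    rw [Finset.mul_sum]
    exact Finset.sum_congr rfl fun i _ => by ring

lemma aux_quad (d : ℕ) (M : Matrix (Fin d) (Fin d) ℝ) (u : Fin d → ℝ) :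
    ∑ i, ∑ j, u i * M i j * u j = u ⬝ᵥ M *ᵥ u := by
  simp [dotProduct, mulVec, Finset.mul_sum, mul_assoc]

open ProbabilityTheory in
lemma aux_map (d : ℕ) (m : EuclideanSpace ℝ (Fin d)) (A S : Matrix (Fin d) (Fin d) ℝ)
    (hA : IsUnit A.det) (hS : A * Aᵀ = S) :
    (stdGaussian (EuclideanSpace ℝ (Fin d))).map (fun x => m + toEuclideanCLM (𝕜 := ℝ) A x)
      = gaussMeasureM d m S := by
  rw [aux_std]
  have hinv : A * A⁻¹ = 1 := Matrix.mul_nonsing_inv A hA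
  have hinv' : A⁻¹ * A = 1 := Matrix.nonsing_inv_mul A hA
  set L := toEuclideanCLM (𝕜 := ℝ) A with hL
  set L' := toEuclideanCLM (𝕜 := ℝ) A⁻¹ with hL'
  have h1 : ∀ x, L (L' x) = x := fun x => by
    rw [← mul_apply_eq_comp, hL, hL', ← map_mul, hinv]; simp
  have h2 : ∀ x, L' (L x) = x := fun x => by
    rw [← mul_apply_eq_comp, hL, hL', ← map_mul, hinv']; simp
  have hfm : Measurable (fun x => m + L x) := by fun_prop
  have hdet : L.det = A.det := by
    rw [ContinuousLinearMap.det, hL]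
    rw [coe_toEuclideanCLM_eq_toEuclideanLin, toEuclideanLin_eq_toLin, LinearMap.det_toLin]
  ext s hs
  rw [Measure.map_apply hfm hs, gaussMeasureM, gaussMeasureM, withDensity_apply _ (hfm hs),
    withDensity_apply _ hs]
  have himg : s = (fun x => m + L x) '' ((fun x => m + L x) ⁻¹' s) := by
    rw [Set.image_preimage_eq]
    intro y
    exact ⟨L' (y - m), by simp [h1]⟩
  conv_rhs => rw [himg]
  rw [lintegral_image_eq_lintegral_abs_det_fderiv_mul (f' := fun _ => L) volume (hfm hs)
    (fun x _ => (L.hasFDerivAt.const_add m).hasFDerivWithinAt)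
    (fun x _ y _ h => by
      have := congrArg L' (add_left_cancel h)
      simpa [h2] using this)]
  congr 1
  ext x
  rw [← ENNReal.ofReal_mul (abs_nonneg _)]
  congr 1
  simp only [hdet, gaussDensityM]
  have hd0 : A.det ≠ 0 := hA.ne_zero
  have hdS : S.det ^ (-(1:ℝ)/2) = |A.det|⁻¹ := by
    rw [← hS, det_mul, det_transpose, ← abs_mul_abs_self, ← sq, ← Real.rpow_natCast,
      ← Real.rpow_mul (abs_nonneg _), ← Real.rpow_neg_one]
    congr 1
    norm_num
  have hSinv : Aᵀ * S⁻¹ * A = 1 := by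
    rw [← hS, Matrix.mul_inv_rev, ← Matrix.mul_assoc, Matrix.mul_assoc, hinv',
      Matrix.mul_one, Matrix.mul_nonsing_inv _ (by simpa using hA)]
  have hq : ∀ v : Fin d → ℝ, (A *ᵥ v) ⬝ᵥ S⁻¹ *ᵥ (A *ᵥ v) = v ⬝ᵥ (1 : Matrix _ _ ℝ) *ᵥ v := by
    intro v
    rw [← hSinv, ← Matrix.mulVec_mulVec, ← Matrix.mulVec_mulVec, Matrix.dotProduct_mulVec v,
      Matrix.vecMul_transpose]
  have e1 := aux_quad d S⁻¹ (fun i => (m + L x) i - m i)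
  have e2 := aux_quad d (1 : Matrix _ _ ℝ)⁻¹ (fun i => x i - (0 : EuclideanSpace ℝ (Fin d)) i)
  rw [e1, e2]
  have e3 : (fun i => (m + L x) i - m i) = A *ᵥ x.ofLp := by
    ext i
    simp [hL, ofLp_toEuclideanCLM]
  rw [e3, hq, hdS]
  simp only [det_one, Real.one_rpow, inv_one, PiLp.zero_apply, sub_zero]
  have := abs_pos.2 hd0
  field_simp

open scoped MatrixOrder Matrix.Norms.L2Operator in
open ProbabilityTheory in
lemma aux_mvg (d : ℕ) (m : EuclideanSpace ℝ (Fin d)) (S : Matrix (Fin d) (Fin d) ℝ)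
    (hS : S.PosDef) : gaussMeasureM d m S = multivariateGaussian m S := by
  have h0 : (CFC.sqrt S).PosSemidef := by
    have := CFC.sqrt_nonneg S
    rwa [Matrix.nonneg_iff_posSemidef] at this
  have h1 : CFC.sqrt S * CFC.sqrt S = S :=
    CFC.sqrt_mul_sqrt_self S (Matrix.nonneg_iff_posSemidef.2 hS.posSemidef)
  rw [multivariateGaussian]
  refine (aux_map d m _ S ?_ ?_).symm
  · have : IsUnit (S.det) := hS.det_pos.ne'.isUnit
    rw [← h1, det_mul] at this
    exact isUnit_of_mul_isUnit_left this
  · have := h0.isHermitian.eq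
    rw [conjTranspose_eq_transpose_of_trivial] at this
    rw [this, h1]

open ProbabilityTheory in
lemma aux_moments (d : ℕ) (m : EuclideanSpace ℝ (Fin d)) (S : Matrix (Fin d) (Fin d) ℝ)
    (hS : S.PosDef) (M : Matrix (Fin d) (Fin d) ℝ) (b : Fin d → ℝ) :
    Integrable (fun x : EuclideanSpace ℝ (Fin d) =>
      (∑ i, ∑ j, (x i - m i) * M i j * (x j - m j)) + ∑ i, b i * (x i - m i))
      (gaussMeasureM d m S) ∧
    ∫ x, ((∑ i, ∑ j, (x i - m i) * M i j * (x j - m j)) + ∑ i, b i * (x i - m i))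
      ∂(gaussMeasureM d m S) = (M * S).trace := by
  rw [aux_mvg d m S hS]
  set P := multivariateGaussian m S
  have hid : MemLp id 2 P := IsGaussian.memLp_two_id
  have hc : ∀ i, MemLp (fun x : EuclideanSpace ℝ (Fin d) => x i) 2 P := fun i =>
    (EuclideanSpace.proj (𝕜 := ℝ) i : EuclideanSpace ℝ (Fin d) →L[ℝ] ℝ).comp_memLp' hid
  have hmean : ∀ i, ∫ x, x i ∂P = m i := fun i => by
    have := (EuclideanSpace.proj (𝕜 := ℝ) i :
      EuclideanSpace ℝ (Fin d) →L[ℝ] ℝ).integral_comp_comm (hid.integrable one_le_two)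
    simpa [P] using this
  have hcc : ∀ i, MemLp (fun x : EuclideanSpace ℝ (Fin d) => x i - m i) 2 P := fun i =>
    (hc i).sub (memLp_const _)
  have hprod : ∀ i j, Integrable (fun x : EuclideanSpace ℝ (Fin d) =>
      (x i - m i) * (x j - m j)) P := fun i j => (hcc i).integrable_mul (hcc j)
  have hprod2 : ∀ i j, ∫ x, (x i - m i) * (x j - m j) ∂P = S i j := fun i j => by
    rw [← covariance_eval_multivariateGaussian (μ := m) hS.posSemidef i j, covariance, hmean, hmean]
  have hlin : ∀ i, Integrable (fun x : EuclideanSpace ℝ (Fin d) => x i - m i) P := fun i =>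
    (hcc i).integrable one_le_two
  have hlin2 : ∀ i, ∫ x, (x i - m i) ∂P = 0 := fun i => by
    rw [integral_sub ((hc i).integrable one_le_two) (integrable_const _), hmean]; simp
  have hprod' : ∀ i j, Integrable (fun x : EuclideanSpace ℝ (Fin d) =>
      (x i - m i) * M i j * (x j - m j)) P := fun i j =>
    ((hprod i j).const_mul (M i j)).congr (ae_of_all _ fun x => by simp only; ring)
  have hprod2' : ∀ i j, ∫ x, (x i - m i) * M i j * (x j - m j) ∂P = M i j * S i j := fun i j => by
    rw [← hprod2, ← integral_const_mul]
    congr 1; ext x; ring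
  have I1 : Integrable (fun x : EuclideanSpace ℝ (Fin d) =>
      (∑ i, ∑ j, (x i - m i) * M i j * (x j - m j))) P :=
    integrable_finsetSum _ fun i _ => integrable_finsetSum _ fun j _ => hprod' i j
  have I2 : Integrable (fun x : EuclideanSpace ℝ (Fin d) => ∑ i, b i * (x i - m i)) P :=
    integrable_finsetSum _ fun i _ => (hlin i).const_mul _
  refine ⟨I1.add I2, ?_⟩
  rw [integral_add I1 I2, integral_finsetSum _ fun i _ => (hlin i).const_mul _,
    integral_finsetSum _ fun i _ => integrable_finsetSum _ fun j _ => hprod' i j]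
  simp only [integral_const_mul, hlin2, mul_zero, Finset.sum_const_zero, add_zero]
  have hsymm : ∀ i j, S i j = S j i := fun i j => by
    have := hS.isHermitian.apply j i
    simpa using this
  simp only [Matrix.trace, Matrix.diag, Matrix.mul_apply]
  refine Finset.sum_congr rfl fun i _ => ?_
  rw [integral_finsetSum _ fun j _ => hprod' i j]
  refine Finset.sum_congr rfl fun j _ => ?_
  rw [hprod2', hsymm]


/-- the dual potential difference is a square -/
lemma aux_diff (d : ℕ) (T T' : Matrix (Fin d) (Fin d) ℝ) (hT : T.PosSemidef)
    (h1 : T * T' = 1) (u v : Fin d → ℝ) :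
    u ⬝ᵥ T *ᵥ u + v ⬝ᵥ T' *ᵥ v - 2 * (u ⬝ᵥ v) =
      (u - T' *ᵥ v) ⬝ᵥ T *ᵥ (u - T' *ᵥ v) := by
  have hTs : Tᵀ = T := by
    have := hT.isHermitian.eq
    rwa [conjTranspose_eq_transpose_of_trivial] at this
  have e1 : T *ᵥ (T' *ᵥ v) = v := by rw [mulVec_mulVec, h1, one_mulVec]
  have e2 : (T' *ᵥ v) ⬝ᵥ T *ᵥ u = u ⬝ᵥ v := by
    rw [dotProduct_mulVec, ← mulVec_transpose, hTs, e1, dotProduct_comm]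
  rw [mulVec_sub, e1, sub_dotProduct, dotProduct_sub, dotProduct_sub, e2,
    dotProduct_comm (T' *ᵥ v) v]
  ring

/-- dual functional -/
def auxF (d : ℕ) (μ1 μ2 : EuclideanSpace ℝ (Fin d)) (T T' : Matrix (Fin d) (Fin d) ℝ)
    (p : EuclideanSpace ℝ (Fin d) × EuclideanSpace ℝ (Fin d)) : ℝ :=
  (((∑ i, ∑ j, (p.1 i - μ1 i) * (1 - T) i j * (p.1 j - μ1 j))
      + ∑ i, (2 * (μ1 i - μ2 i)) * (p.1 i - μ1 i)) +
    ((∑ i, ∑ j, (p.2 i - μ2 i) * (1 - T') i j * (p.2 j - μ2 j))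
      + ∑ i, (-2 * (μ1 i - μ2 i)) * (p.2 i - μ2 i))) + ‖μ2 - μ1‖ ^ 2

lemma auxF_eq (d : ℕ) (μ1 μ2 : EuclideanSpace ℝ (Fin d)) (T T' : Matrix (Fin d) (Fin d) ℝ)
    (hT : T.PosSemidef) (h1 : T * T' = 1)
    (p : EuclideanSpace ℝ (Fin d) × EuclideanSpace ℝ (Fin d)) :
    ‖p.1 - p.2‖ ^ 2 = auxF d μ1 μ2 T T' p +
      ((p.1 - μ1).ofLp - T' *ᵥ (p.2 - μ2).ofLp) ⬝ᵥ
        T *ᵥ ((p.1 - μ1).ofLp - T' *ᵥ (p.2 - μ2).ofLp) := by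
  obtain ⟨x, y⟩ := p
  rw [← aux_diff d T T' hT h1, auxF]
  have e1 := aux_quad d (1 - T) (fun i => x i - μ1 i)
  have e2 := aux_quad d (1 - T') (fun i => y i - μ2 i)
  have f1 : (fun i => x i - μ1 i) = (x - μ1).ofLp := rfl
  have f2 : (fun i => y i - μ2 i) = (y - μ2).ofLp := rfl
  simp only
  rw [e1, e2, f1, f2]
  simp only [sub_mulVec, one_mulVec, dotProduct_sub]
  have key : ‖x - y‖ ^ 2 = (x - μ1).ofLp ⬝ᵥ (x - μ1).ofLp + (y - μ2).ofLp ⬝ᵥ (y - μ2).ofLp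
      + ∑ i, (2 * (μ1 i - μ2 i)) * (x i - μ1 i) + ∑ i, (-2 * (μ1 i - μ2 i)) * (y i - μ2 i)
      + ‖μ2 - μ1‖ ^ 2 - 2 * ((x - μ1).ofLp ⬝ᵥ (y - μ2).ofLp) := by
    rw [EuclideanSpace.real_norm_sq_eq, EuclideanSpace.real_norm_sq_eq]
    simp only [dotProduct, Finset.mul_sum, ← Finset.sum_add_distrib, ← Finset.sum_sub_distrib]
    refine Finset.sum_congr rfl fun i _ => ?_
    simp only [PiLp.sub_apply]
    ring
  rw [key]
  ring

lemma auxF_int (d : ℕ) (μ1 μ2 : EuclideanSpace ℝ (Fin d)) (S1 S2 : Matrix (Fin d) (Fin d) ℝ)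
    (hS1 : S1.PosDef) (hS2 : S2.PosDef) (T T' : Matrix (Fin d) (Fin d) ℝ)
    (c : Measure (EuclideanSpace ℝ (Fin d) × EuclideanSpace ℝ (Fin d)))
    (hc1 : c.map Prod.fst = gaussMeasureM d μ1 S1) (hc2 : c.map Prod.snd = gaussMeasureM d μ2 S2) :
    Integrable (auxF d μ1 μ2 T T') c ∧
    ∫ p, auxF d μ1 μ2 T T' p ∂c =
      ((1 - T) * S1).trace + ((1 - T') * S2).trace + ‖μ2 - μ1‖ ^ 2 := by
  obtain ⟨I1, E1⟩ := aux_moments d μ1 S1 hS1 (1 - T) (fun i => 2 * (μ1 i - μ2 i))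
  obtain ⟨I2, E2⟩ := aux_moments d μ2 S2 hS2 (1 - T') (fun i => -2 * (μ1 i - μ2 i))
  have hP : IsProbabilityMeasure c := by
    have : IsProbabilityMeasure (c.map Prod.fst) := by
      rw [hc1, aux_mvg d μ1 S1 hS1]; infer_instance
    exact Measure.isProbabilityMeasure_of_map Prod.fst
  rw [← hc1] at I1 E1
  rw [← hc2] at I2 E2
  rw [integral_map measurable_fst.aemeasurable I1.1] at E1
  rw [integral_map measurable_snd.aemeasurable I2.1] at E2
  have J1 := I1.comp_measurable measurable_fst
  have J2 := I2.comp_measurable measurable_snd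
  refine ⟨(J1.add J2).add (integrable_const _), ?_⟩
  unfold auxF
  rw [integral_add, integral_add, E1, E2]
  · simp
  · exact J1
  · exact J2
  · exact J1.add J2
  · exact integrable_const _

/-- closed-form squared 2-Wasserstein distance between Gaussian measures:
`W₂²(N(μ₁,Σ₁), N(μ₂,Σ₂)) = ‖μ₂−μ₁‖² + Tr(Σ₁ + Σ₂ − 2(Σ₂^{1/2} Σ₁ Σ₂^{1/2})^{1/2})`,
where the square roots are the unique symmetric positive semidefinite square roots,
characterized here by the hypotheses on `S2sqrt` and `R`. -/
theorem w2sq_gaussian_gaussian (d : ℕ) (hd : 1 ≤ d)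
    (μ1 μ2 : EuclideanSpace ℝ (Fin d)) (S1 S2 : Matrix (Fin d) (Fin d) ℝ)
    (hS1 : S1.PosDef) (hS2 : S2.PosDef)
    (S2sqrt : Matrix (Fin d) (Fin d) ℝ) (hS2sqrt : S2sqrt.PosSemidef)
    (hS2sqrt_sq : S2sqrt * S2sqrt = S2)
    (R : Matrix (Fin d) (Fin d) ℝ) (hR : R.PosSemidef)
    (hRsq : R * R = S2sqrt * S1 * S2sqrt) :
    W2sq d (gaussMeasureM d μ1 S1) (gaussMeasureM d μ2 S2) =
      ENNReal.ofReal (‖μ2 - μ1‖ ^ 2 + (S1 + S2 - (2 : ℝ) • R).trace) := by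
  have hQs : S2sqrtᵀ = S2sqrt := by
    have := hS2sqrt.isHermitian.eq
    rwa [conjTranspose_eq_transpose_of_trivial] at this
  have hRs : Rᵀ = R := by
    have := hR.isHermitian.eq
    rwa [conjTranspose_eq_transpose_of_trivial] at this
  have hQu : IsUnit S2sqrt.det := by
    have : IsUnit (S2.det) := hS2.det_pos.ne'.isUnit
    rw [← hS2sqrt_sq, det_mul] at this
    exact isUnit_of_mul_isUnit_left this
  have hRu : IsUnit R.det := by
    have : IsUnit ((R * R).det) := by
      rw [hRsq, det_mul, det_mul]
      exact (hQu.mul hS1.det_pos.ne'.isUnit).mul hQu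
    rw [det_mul] at this
    exact isUnit_of_mul_isUnit_left this
  have q1 : S2sqrt * S2sqrt⁻¹ = 1 := Matrix.mul_nonsing_inv _ hQu
  have q2 : S2sqrt⁻¹ * S2sqrt = 1 := Matrix.nonsing_inv_mul _ hQu
  have r1 : R * R⁻¹ = 1 := Matrix.mul_nonsing_inv _ hRu
  have r2 : R⁻¹ * R = 1 := Matrix.nonsing_inv_mul _ hRu
  set Q := S2sqrt
  set T := Q * R⁻¹ * Q with hTdef
  set T' := Q⁻¹ * R * Q⁻¹ with hT'def
  have hT : T.PosSemidef := by
    have := hR.inv.mul_mul_conjTranspose_same Q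
    rwa [conjTranspose_eq_transpose_of_trivial, hQs] at this
  have hTT' : T * T' = 1 := by
    calc T * T' = Q * R⁻¹ * (Q * Q⁻¹) * R * Q⁻¹ := by simp only [hTdef, hT'def, Matrix.mul_assoc]
      _ = Q * (R⁻¹ * R) * Q⁻¹ := by rw [q1]; simp only [Matrix.mul_assoc, Matrix.one_mul]
      _ = 1 := by rw [r2, Matrix.mul_one, q1]
  have tr1 : (T * S1).trace = R.trace := by
    calc (T * S1).trace = (Q * (R⁻¹ * Q * S1)).trace := by simp only [hTdef, Matrix.mul_assoc]
      _ = (R⁻¹ * (Q * S1 * Q)).trace := by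
        rw [Matrix.trace_mul_comm]; simp only [Matrix.mul_assoc]
      _ = R.trace := by rw [← hRsq, ← Matrix.mul_assoc, r2, Matrix.one_mul]
  have tr2 : (T' * S2).trace = R.trace := by
    calc (T' * S2).trace = (Q⁻¹ * R * (Q⁻¹ * Q) * Q).trace := by
          rw [← hS2sqrt_sq]; simp only [hT'def, Matrix.mul_assoc]
      _ = (Q⁻¹ * (R * Q)).trace := by rw [q2, Matrix.mul_one, Matrix.mul_assoc]
      _ = (R * (Q * Q⁻¹)).trace := by rw [Matrix.trace_mul_comm, Matrix.mul_assoc]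
      _ = R.trace := by rw [q1, Matrix.mul_one]
  have hval : ((1 - T) * S1).trace + ((1 - T') * S2).trace + ‖μ2 - μ1‖ ^ 2 =
      ‖μ2 - μ1‖ ^ 2 + (S1 + S2 - (2 : ℝ) • R).trace := by
    rw [Matrix.sub_mul, Matrix.sub_mul, Matrix.one_mul, Matrix.one_mul, trace_sub, trace_sub,
      tr1, tr2, trace_sub, trace_add, trace_smul, smul_eq_mul]
    ring
  rw [← hval]
  have hnn : ∀ w : Fin d → ℝ, 0 ≤ w ⬝ᵥ T *ᵥ w := fun w => by
    have := hT.dotProduct_mulVec_nonneg w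
    simpa using this
  apply le_antisymm
  · -- the optimal coupling
    set P := ProbabilityTheory.stdGaussian (EuclideanSpace ℝ (Fin d))
    set f1 : EuclideanSpace ℝ (Fin d) → EuclideanSpace ℝ (Fin d) :=
      fun z => μ1 + toEuclideanCLM (𝕜 := ℝ) (Q⁻¹ * R) z with hf1
    set f2 : EuclideanSpace ℝ (Fin d) → EuclideanSpace ℝ (Fin d) :=
      fun z => μ2 + toEuclideanCLM (𝕜 := ℝ) Q z with hf2
    have m1 : Measurable f1 := by fun_prop
    have m2 : Measurable f2 := by fun_prop
    have m12 : Measurable (fun z => (f1 z, f2 z)) := m1.prodMk m2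
    have g1 : P.map f1 = gaussMeasureM d μ1 S1 := by
      refine aux_map d μ1 _ S1 ?_ ?_
      · rw [det_mul]
        exact IsUnit.mul (by rw [det_nonsing_inv]; simpa using hQu) hRu
      · rw [transpose_mul, hRs, transpose_nonsing_inv, hQs]
        calc Q⁻¹ * R * (R * Q⁻¹) = Q⁻¹ * (R * R) * Q⁻¹ := by simp only [Matrix.mul_assoc]
          _ = (Q⁻¹ * Q) * S1 * (Q * Q⁻¹) := by rw [hRsq]; simp only [Matrix.mul_assoc]
          _ = S1 := by rw [q1, q2, Matrix.one_mul, Matrix.mul_one]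
    have g2 : P.map f2 = gaussMeasureM d μ2 S2 :=
      aux_map d μ2 _ S2 hQu (by rw [hQs, hS2sqrt_sq])
    set c := P.map (fun z => (f1 z, f2 z)) with hc
    have c1 : c.map Prod.fst = gaussMeasureM d μ1 S1 := by
      rw [hc, Measure.map_map measurable_fst m12, ← g1]; rfl
    have c2 : c.map Prod.snd = gaussMeasureM d μ2 S2 := by
      rw [hc, Measure.map_map measurable_snd m12, ← g2]; rfl
    obtain ⟨I, E⟩ := auxF_int d μ1 μ2 S1 S2 hS1 hS2 T T' c c1 c2
    have hm : Measurable fun p : EuclideanSpace ℝ (Fin d) × EuclideanSpace ℝ (Fin d) =>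
        ‖p.1 - p.2‖ ^ 2 := by fun_prop
    have hae : ∀ᵐ p ∂c, auxF d μ1 μ2 T T' p = ‖p.1 - p.2‖ ^ 2 := by
      have hms : MeasurableSet {p : EuclideanSpace ℝ (Fin d) × EuclideanSpace ℝ (Fin d) |
          auxF d μ1 μ2 T T' p = ‖p.1 - p.2‖ ^ 2} := by
        refine measurableSet_eq_fun ?_ hm
        unfold auxF
        fun_prop
      rw [hc, ae_map_iff m12.aemeasurable hms]
      refine ae_of_all _ fun z => ?_
      rw [auxF_eq d μ1 μ2 T T' hT hTT']
      have : ((f1 z - μ1).ofLp - T' *ᵥ (f2 z - μ2).ofLp) = 0 := by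
        simp only [hf1, hf2, add_sub_cancel_left, ofLp_toEuclideanCLM, mulVec_mulVec, hT'def]
        rw [Matrix.mul_assoc _ Q⁻¹ Q, q2, Matrix.mul_one, sub_self]
      simp only [this]
      simp
    refine (iInf_le_of_le c (iInf_le_of_le c1 (iInf_le_of_le c2 le_rfl))).trans ?_
    have I' : Integrable (fun p : EuclideanSpace ℝ (Fin d) × EuclideanSpace ℝ (Fin d) =>
        ‖p.1 - p.2‖ ^ 2) c := I.congr hae
    rw [← E, integral_congr_ae hae,
      ofReal_integral_eq_lintegral_ofReal I' (ae_of_all _ fun p => by positivity)]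
  · refine le_iInf fun c => le_iInf fun c1 => le_iInf fun c2 => ?_
    obtain ⟨I, E⟩ := auxF_int d μ1 μ2 S1 S2 hS1 hS2 T T' c c1 c2
    rw [← E]
    calc ENNReal.ofReal (∫ p, auxF d μ1 μ2 T T' p ∂c)
        ≤ ENNReal.ofReal (∫ p, max (auxF d μ1 μ2 T T' p) 0 ∂c) :=
          ENNReal.ofReal_le_ofReal (integral_mono I I.pos_part fun p => le_max_left _ _)
      _ = ∫⁻ p, ENNReal.ofReal (max (auxF d μ1 μ2 T T' p) 0) ∂c :=
          ofReal_integral_eq_lintegral_ofReal I.pos_part (ae_of_all _ fun p => le_max_right _ _)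
      _ ≤ _ := by
          refine lintegral_mono fun p => ENNReal.ofReal_le_ofReal (max_le ?_ (by positivity))
          rw [auxF_eq d μ1 μ2 T T' hT hTT']
          linarith [hnn ((p.1 - μ1).ofLp - T' *ᵥ (p.2 - μ2).ofLp)]
end
end

section
/- Let p₀ : ℝ^d → (0, ∞) be a probability density such that log p₀ is C*-strongly concave with C* > 1/σ². Then for every t ∈ (0, T], the function log p̃_t is C_t-strongly concave, where C_t := 1/( m_t²/C* + σ²(1 − m_t²) ) − 1/σ². Moreover, 0 ≤ C_t ≤ C* − 1/σ² for every t ∈ [0, T]. -/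
open MeasureTheory Real Set
open scoped ENNReal

noncomputable section

/-- Density of the Gaussian measure `N(0, σ² I_d)` on `ℝ^d` (here `σ2 = σ²`). -/
def gaussDensity (d : ℕ) (σ2 : ℝ) (x : EuclideanSpace ℝ (Fin d)) : ℝ :=
  (2 * π * σ2) ^ (-(d : ℝ) / 2) * Real.exp (-‖x‖ ^ 2 / (2 * σ2))

/-- `m_t = exp(−(1/(2σ²)) ∫₀^t β(s) ds)` (here `σ2 = σ²`). -/
def mcoef (σ2 : ℝ) (β : ℝ → ℝ) (t : ℝ) : ℝ :=
  Real.exp (-(1 / (2 * σ2)) * ∫ s in (0:ℝ)..t, β s)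

/-- `σ_t = (σ²(1 − m_t²))^{1/2}` (here `σ2 = σ²`). -/
def scoef (σ2 : ℝ) (β : ℝ → ℝ) (t : ℝ) : ℝ :=
  Real.sqrt (σ2 * (1 - mcoef σ2 β t ^ 2))

/-- The forward marginal density at time `t` started from the density `p0`:
`p_t(y) = ∫ (2πσ_t²)^{−d/2} exp(−‖y − m_t x‖²/(2σ_t²)) p0(x) dx`. -/
def forwardDensity (d : ℕ) (σ2 : ℝ) (β : ℝ → ℝ) (p0 : EuclideanSpace ℝ (Fin d) → ℝ)
    (t : ℝ) (y : EuclideanSpace ℝ (Fin d)) : ℝ :=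
  ∫ x, (2 * π * scoef σ2 β t ^ 2) ^ (-(d : ℝ) / 2) *
    Real.exp (-‖y - mcoef σ2 β t • x‖ ^ 2 / (2 * scoef σ2 β t ^ 2)) * p0 x

/-- `f : ℝ^d → ℝ` is `C`-strongly concave if `x ↦ f(x) + (C/2)‖x‖²` is concave. -/
def StronglyConcave (d : ℕ) (C : ℝ) (f : EuclideanSpace ℝ (Fin d) → ℝ) : Prop :=
  ConcaveOn ℝ Set.univ fun x => f x + C / 2 * ‖x‖ ^ 2

/-- `C_t = 1/(m_t²/C* + σ²(1 − m_t²)) − 1/σ²` (here `σ2 = σ²`). -/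
def concConst (σ2 : ℝ) (β : ℝ → ℝ) (Cstar t : ℝ) : ℝ :=
  1 / (mcoef σ2 β t ^ 2 / Cstar + σ2 * (1 - mcoef σ2 β t ^ 2)) - 1 / σ2


/-- Weighted AM-GM in `ℝ≥0∞`. -/
lemma ennreal_amgm {a b : ℝ} (ha : 0 < a) (hb : 0 < b) (hab : a + b = 1) (u v : ℝ≥0∞) :
    u ^ a * v ^ b ≤ ENNReal.ofReal a * u + ENNReal.ofReal b * v := by
  have ha' : ENNReal.ofReal a ≠ 0 := by simpa using ha
  have hb' : ENNReal.ofReal b ≠ 0 := by simpa using hb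
  by_cases hu : u = ∞
  · subst hu; simp [ENNReal.mul_top ha']
  by_cases hv : v = ∞
  · subst hv; simp [ENNReal.mul_top hb']
  lift u to NNReal using hu
  lift v to NNReal using hv
  rw [← ENNReal.coe_rpow_of_nonneg _ ha.le, ← ENNReal.coe_rpow_of_nonneg _ hb.le]
  have h := NNReal.geom_mean_le_arith_mean2_weighted (Real.toNNReal a) (Real.toNNReal b) u v
    (by rw [← Real.toNNReal_add ha.le hb.le, hab, Real.toNNReal_one])
  rw [Real.coe_toNNReal a ha.le, Real.coe_toNNReal b hb.le] at h
  simp only [ENNReal.ofReal]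
  exact_mod_cast h

/-- One-dimensional Brunn-Minkowski for compact sets. -/
lemma bm_compact {K L S : Set ℝ} (hK : IsCompact K) (hL : IsCompact L) (hKn : K.Nonempty)
    (hLn : L.Nonempty) (hS : ∀ x ∈ K, ∀ y ∈ L, x + y ∈ S) :
    volume K + volume L ≤ volume S := by
  obtain ⟨k, hk, hkmax⟩ := hK.exists_isGreatest hKn
  obtain ⟨l, hl, hlmin⟩ := hL.exists_isLeast hLn
  have h1 : volume ((fun x => l + x) '' K) = volume K := by
    rw [image_add_left]; exact measure_preimage_add volume _ _
  have h2 : volume ((fun x => k + x) '' L) = volume L := by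
    rw [image_add_left]; exact measure_preimage_add volume _ _
  have hm : MeasurableSet ((fun x => k + x) '' L) :=
    (hL.image (by fun_prop)).measurableSet
  have hd : AEDisjoint volume ((fun x => l + x) '' K) ((fun x => k + x) '' L) := by
    refine measure_mono_null (t := {k + l}) ?_ (by simp)
    rintro z ⟨⟨x, hx, rfl⟩, ⟨y, hy, hxy⟩⟩
    have := hkmax hx
    have := hlmin hy
    simp only [mem_singleton_iff] at *
    linarith
  rw [← h1, ← h2, ← measure_union₀ hm.nullMeasurableSet hd]
  apply measure_mono
  rintro z (⟨x, hx, rfl⟩ | ⟨y, hy, rfl⟩)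
  · have := hS _ hx _ hl
    rwa [add_comm] at this
  · exact hS _ hk _ hy

lemma exists_compact_ge {A : Set ℝ} (hA : MeasurableSet A) (hAn : A.Nonempty) {r : ℝ≥0∞}
    (hr : r < volume A ∨ r = 0) : ∃ K ⊆ A, IsCompact K ∧ K.Nonempty ∧ r ≤ volume K := by
  obtain ⟨x, hx⟩ := hAn
  rcases hr with hr | hr
  · obtain ⟨K, hKA, hK, hrK⟩ := hA.exists_lt_isCompact hr
    refine ⟨K, hKA, hK, ?_, hrK.le⟩
    by_contra hne
    rw [not_nonempty_iff_eq_empty] at hne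
    simp [hne] at hrK
  · exact ⟨{x}, by simpa using hx, isCompact_singleton, by simp, by simp [hr]⟩

/-- One-dimensional Brunn-Minkowski. -/
lemma bm_one {A B S : Set ℝ} (hA : MeasurableSet A) (hB : MeasurableSet B) (hAn : A.Nonempty)
    (hBn : B.Nonempty) (hS : ∀ x ∈ A, ∀ y ∈ B, x + y ∈ S) :
    volume A + volume B ≤ volume S := by
  have key : ∀ r s : ℝ≥0∞, (r < volume A ∨ r = 0) → (s < volume B ∨ s = 0) →
      r + s ≤ volume S := by
    intro r s hr hs
    obtain ⟨K, hKA, hK, hKn, hrK⟩ := exists_compact_ge hA hAn hr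
    obtain ⟨L, hLB, hL, hLn, hsL⟩ := exists_compact_ge hB hBn hs
    exact (add_le_add hrK hsL).trans
      (bm_compact hK hL hKn hLn fun x hx y hy => hS x (hKA hx) y (hLB hy))
  have sup : ∀ x : ℝ≥0∞, x = ⨆ r : {r : ℝ≥0∞ // r < x ∨ r = 0}, (r : ℝ≥0∞) := by
    intro x
    apply le_antisymm
    · refine le_of_forall_lt fun c hc => ?_
      obtain ⟨e, hce, hex⟩ := exists_between hc
      exact lt_of_lt_of_le hce (le_iSup (fun r : {r : ℝ≥0∞ // r < x ∨ r = 0} => (r : ℝ≥0∞))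
        ⟨e, Or.inl hex⟩)
    · refine iSup_le ?_
      rintro ⟨r, hr | hr⟩
      · exact hr.le
      · simp [hr]
  rw [sup (volume A), sup (volume B)]
  have : Nonempty {r : ℝ≥0∞ // r < volume A ∨ r = 0} := ⟨⟨0, Or.inr rfl⟩⟩
  have : Nonempty {r : ℝ≥0∞ // r < volume B ∨ r = 0} := ⟨⟨0, Or.inr rfl⟩⟩
  refine ENNReal.iSup_add_iSup_le fun r s => key r s r.2 s.2

lemma bm_one_weighted {a b : ℝ} (ha : 0 < a) (hb : 0 < b) {A B S : Set ℝ}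
    (hA : MeasurableSet A) (hB : MeasurableSet B) (hAn : A.Nonempty)
    (hBn : B.Nonempty) (hS : ∀ x ∈ A, ∀ y ∈ B, a * x + b * y ∈ S) :
    ENNReal.ofReal a * volume A + ENNReal.ofReal b * volume B ≤ volume S := by
  have h1 := Measure.addHaar_smul_of_nonneg volume ha.le A
  have h2 := Measure.addHaar_smul_of_nonneg volume hb.le B
  simp only [Module.finrank_self, pow_one] at h1 h2
  rw [← h1, ← h2]
  refine bm_one (hA.const_smul₀ a) (hB.const_smul₀ b) hAn.smul_set hBn.smul_set ?_
  rintro _ ⟨x, hx, rfl⟩ _ ⟨y, hy, rfl⟩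
  exact hS x hx y hy

lemma layer_ge {h : ℝ → ℝ≥0∞} (hh : Measurable h) (hb : ∀ x, h x ≤ 1) :
    ∫⁻ x, h x = ∫⁻ t in Ioo (0:ℝ) 1, volume {x | ENNReal.ofReal t < h x} := by
  have hfin : ∀ x, h x ≠ ∞ := fun x => ne_top_of_le_ne_top ENNReal.one_ne_top (hb x)
  have e1 : ∫⁻ x, h x = ∫⁻ x, ENNReal.ofReal (h x).toReal :=
    lintegral_congr fun x => (ENNReal.ofReal_toReal (hfin x)).symm
  rw [e1, lintegral_eq_lintegral_meas_lt volume
    (Filter.Eventually.of_forall fun x => ENNReal.toReal_nonneg) hh.ennreal_toReal.aemeasurable]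
  have e2 : ∀ t : ℝ, 0 < t → {x | t < (h x).toReal} = {x | ENNReal.ofReal t < h x} := by
    intro t ht
    ext x
    simp only [mem_ofPred_eq]
    rw [ENNReal.ofReal_lt_iff_lt_toReal ht.le (hfin x)]
  rw [← lintegral_indicator measurableSet_Ioi, ← lintegral_indicator measurableSet_Ioo]
  refine lintegral_congr fun t => ?_
  by_cases ht : 0 < t
  · by_cases ht1 : t < 1
    · rw [indicator_of_mem (show t ∈ Ioi 0 from ht), indicator_of_mem (show t ∈ Ioo 0 1 from ⟨ht, ht1⟩),
        e2 t ht]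
    · rw [indicator_of_mem (show t ∈ Ioi 0 from ht), indicator_of_notMem (fun h => ht1 h.2)]
      rw [e2 t ht]
      convert measure_empty (μ := (volume : Measure ℝ))
      ext x
      simp only [mem_ofPred_eq, mem_empty_iff_false, iff_false, not_lt]
      refine (hb x).trans ?_
      simpa using not_lt.1 ht1
  · rw [indicator_of_notMem (show t ∉ Ioi 0 from ht), indicator_of_notMem (fun h => ht h.1)]

/-- Prékopa-Leindler in dimension one, normalized. -/
lemma pl_one_norm {a b : ℝ} (ha : 0 < a) (hb : 0 < b) (hab : a + b = 1) {f g h : ℝ → ℝ≥0∞}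
    (hf : Measurable f) (hg : Measurable g) (hh : Measurable h)
    (hfs : ⨆ x, f x = 1) (hgs : ⨆ x, g x = 1)
    (H : ∀ x y, f x ^ a * g y ^ b ≤ h (a * x + b * y)) :
    (∫⁻ x, f x) ^ a * (∫⁻ x, g x) ^ b ≤ ∫⁻ x, h x := by
  have hf1 : ∀ x, f x ≤ 1 := fun x => hfs ▸ le_iSup f x
  have hg1 : ∀ x, g x ≤ 1 := fun x => hgs ▸ le_iSup g x
  refine (ennreal_amgm ha hb hab _ _).trans ?_
  have hmin : ∫⁻ x, min (h x) 1 ≤ ∫⁻ x, h x := lintegral_mono fun x => min_le_left _ _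
  refine le_trans ?_ hmin
  rw [layer_ge hf hf1, layer_ge hg hg1, layer_ge (hh.min measurable_const) (fun x => min_le_right _ _)]
  have mono : ∀ k : ℝ → ℝ≥0∞, Measurable fun t : ℝ => volume {x | ENNReal.ofReal t < k x} := by
    intro k
    refine Antitone.measurable fun s t hst => measure_mono fun x hx => ?_
    exact lt_of_le_of_lt (ENNReal.ofReal_le_ofReal hst) hx
  rw [← lintegral_const_mul _ (mono f), ← lintegral_const_mul _ (mono g),
    ← lintegral_add_left ((mono f).const_mul _)]
  refine setLIntegral_mono (mono _) fun t ht => ?_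
  have ht1 : ENNReal.ofReal t < 1 := by
    rw [← ENNReal.ofReal_one]; exact (ENNReal.ofReal_lt_ofReal_iff one_pos).2 ht.2
  refine bm_one_weighted ha hb (measurableSet_lt measurable_const hf)
    (measurableSet_lt measurable_const hg) ?_ ?_ ?_
  · obtain ⟨x, hx⟩ := lt_iSup_iff.1 (hfs ▸ ht1); exact ⟨x, hx⟩
  · obtain ⟨x, hx⟩ := lt_iSup_iff.1 (hgs ▸ ht1); exact ⟨x, hx⟩
  · intro x hx y hy
    simp only [mem_ofPred_eq] at hx hy ⊢
    refine lt_min (lt_of_lt_of_le ?_ (H x y)) ht1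
    have e : ENNReal.ofReal t = ENNReal.ofReal t ^ a * ENNReal.ofReal t ^ b := by
      rw [← ENNReal.rpow_add _ _ (by simpa using ht.1) ENNReal.ofReal_ne_top, hab, ENNReal.rpow_one]
    calc ENNReal.ofReal t = ENNReal.ofReal t ^ a * ENNReal.ofReal t ^ b := e
      _ < f x ^ a * g y ^ b :=
        ENNReal.mul_lt_mul (ENNReal.rpow_lt_rpow hx ha) (ENNReal.rpow_lt_rpow hy hb)

/-- Prékopa-Leindler in dimension one, bounded functions. -/
lemma pl_one_bdd {a b : ℝ} (ha : 0 < a) (hb : 0 < b) (hab : a + b = 1) {f g h : ℝ → ℝ≥0∞}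
    (hf : Measurable f) (hg : Measurable g) (hh : Measurable h)
    (hfs : ⨆ x, f x ≠ ∞) (hgs : ⨆ x, g x ≠ ∞)
    (H : ∀ x y, f x ^ a * g y ^ b ≤ h (a * x + b * y)) :
    (∫⁻ x, f x) ^ a * (∫⁻ x, g x) ^ b ≤ ∫⁻ x, h x := by
  set u := ⨆ x, f x with hu
  set v := ⨆ x, g x with hv
  by_cases hu0 : u = 0
  · have : ∀ x, f x = 0 := by simpa [hu0] using hu.symm
    simp [this, ENNReal.zero_rpow_of_pos ha]
  by_cases hv0 : v = 0
  · have : ∀ x, g x = 0 := by simpa [hv0] using hv.symm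
    simp [this, ENNReal.zero_rpow_of_pos hb]
  have h1 := pl_one_norm ha hb hab (f := fun x => u⁻¹ * f x) (g := fun x => v⁻¹ * g x)
    (h := fun x => (u⁻¹ ^ a * v⁻¹ ^ b) * h x) (hf.const_mul _) (hg.const_mul _) (hh.const_mul _)
    (by rw [← ENNReal.mul_iSup, ← hu, ENNReal.inv_mul_cancel hu0 hfs])
    (by rw [← ENNReal.mul_iSup, ← hv, ENNReal.inv_mul_cancel hv0 hgs])
    (by
      intro x y
      rw [ENNReal.mul_rpow_of_nonneg _ _ ha.le, ENNReal.mul_rpow_of_nonneg _ _ hb.le,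
        mul_mul_mul_comm]
      gcongr
      exact H x y)
  rw [lintegral_const_mul _ hf, lintegral_const_mul _ hg, lintegral_const_mul _ hh,
    ENNReal.mul_rpow_of_nonneg _ _ ha.le, ENNReal.mul_rpow_of_nonneg _ _ hb.le,
        mul_mul_mul_comm] at h1
  refine (ENNReal.mul_le_mul_iff_right ?_ ?_).1 h1
  · refine mul_ne_zero ?_ ?_
    · simp [ENNReal.rpow_eq_zero_iff, hfs, hu0, ha, ha.not_gt]
    · simp [ENNReal.rpow_eq_zero_iff, hgs, hv0, hb, hb.not_gt]
  · refine ENNReal.mul_ne_top ?_ ?_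
    · exact ENNReal.rpow_ne_top_of_nonneg ha.le (by simpa using hu0)
    · exact ENNReal.rpow_ne_top_of_nonneg hb.le (by simpa using hv0)

lemma iSup_lintegral_min {f : ℝ → ℝ≥0∞} (hf : Measurable f) :
    Filter.Tendsto (fun n : ℕ => ∫⁻ x, min (f x) n) Filter.atTop (nhds (∫⁻ x, f x)) := by
  have hm : Monotone fun (n : ℕ) (x : ℝ) => min (f x) (n : ℝ≥0∞) := by
    intro n m hnm x
    exact min_le_min le_rfl (by exact_mod_cast hnm)
  have e : ∀ x, f x = ⨆ n : ℕ, min (f x) (n : ℝ≥0∞) := by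
    intro x
    rw [← inf_iSup_eq (f x) (fun n : ℕ => (n : ℝ≥0∞)), ENNReal.iSup_natCast, inf_top_eq]
  have : ∫⁻ x, f x = ⨆ n : ℕ, ∫⁻ x, min (f x) n := by
    rw [← lintegral_iSup (fun n => hf.min measurable_const) hm]
    exact lintegral_congr e
  rw [this]
  exact tendsto_atTop_iSup fun n m hnm => lintegral_mono (hm hnm)

/-- The Prékopa-Leindler property of a measure space. -/
def PLProp (a b : ℝ) (E : Type) [AddCommGroup E] [Module ℝ E] [MeasureSpace E] : Prop :=
  ∀ f g h : E → ℝ≥0∞, Measurable f → Measurable g → Measurable h →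
    (∀ x y, f x ^ a * g y ^ b ≤ h (a • x + b • y)) →
    (∫⁻ x, f x) ^ a * (∫⁻ x, g x) ^ b ≤ ∫⁻ x, h x

lemma pl_one {a b : ℝ} (ha : 0 < a) (hb : 0 < b) (hab : a + b = 1) : PLProp a b ℝ := by
  intro f g h hf hg hh H
  by_cases hf0 : ∫⁻ x, f x = 0
  · simp [hf0, ENNReal.zero_rpow_of_pos ha]
  by_cases hg0 : ∫⁻ x, g x = 0
  · simp [hg0, ENNReal.zero_rpow_of_pos hb]
  have hlim : Filter.Tendsto (fun n : ℕ => (∫⁻ x, min (f x) n) ^ a * (∫⁻ x, min (g x) n) ^ b)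
      Filter.atTop (nhds ((∫⁻ x, f x) ^ a * (∫⁻ x, g x) ^ b)) := by
    refine ENNReal.Tendsto.mul ((iSup_lintegral_min hf).ennrpow_const a) (Or.inl ?_)
      ((iSup_lintegral_min hg).ennrpow_const b) (Or.inl ?_)
    · simp [ENNReal.rpow_eq_zero_iff, hf0, ha.not_gt]
    · simp [ENNReal.rpow_eq_zero_iff, hg0, hb.not_gt]
  refine le_of_tendsto' hlim fun n => ?_
  refine pl_one_bdd ha hb hab (hf.min measurable_const) (hg.min measurable_const) hh ?_ ?_ ?_
  · exact ne_top_of_le_ne_top (ENNReal.natCast_ne_top n) (iSup_le fun x => min_le_right _ _)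
  · exact ne_top_of_le_ne_top (ENNReal.natCast_ne_top n) (iSup_le fun x => min_le_right _ _)
  · intro x y
    refine le_trans ?_ (H x y)
    gcongr <;> exact min_le_left _ _

lemma PLProp.prod {a b : ℝ} {E F : Type} [AddCommGroup E] [Module ℝ E]
    [MeasureSpace E] [AddCommGroup F] [Module ℝ F] [MeasureSpace F]
    [SFinite (volume : Measure F)] (hE : PLProp a b E) (hF : PLProp a b F) :
    PLProp a b (E × F) := by
  intro f g h hf hg hh H
  simp only [Measure.volume_eq_prod]
  rw [lintegral_prod _ hf.aemeasurable, lintegral_prod _ hg.aemeasurable,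
    lintegral_prod _ hh.aemeasurable]
  refine hE _ _ _ hf.lintegral_prod_right' hg.lintegral_prod_right' hh.lintegral_prod_right' ?_
  intro x y
  refine hF _ _ _ (hf.comp measurable_prodMk_left) (hg.comp measurable_prodMk_left)
    (hh.comp measurable_prodMk_left) ?_
  intro x' y'
  exact H (x, x') (y, y')

lemma PLProp.transfer {a b : ℝ} {E F : Type} [AddCommGroup E] [Module ℝ E]
    [MeasureSpace E] [AddCommGroup F] [Module ℝ F] [MeasureSpace F]
    (hE : PLProp a b E) (e : E ≃ᵐ F) (he : MeasurePreserving e)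
    (hlin : ∀ x y, e (a • x + b • y) = a • e x + b • e y) : PLProp a b F := by
  intro f g h hf hg hh H
  rw [← he.lintegral_comp hf, ← he.lintegral_comp hg, ← he.lintegral_comp hh]
  refine hE _ _ _ (hf.comp e.measurable) (hg.comp e.measurable) (hh.comp e.measurable) ?_
  intro x y
  have := H (e x) (e y)
  rwa [← hlin] at this

lemma pl_pi {a b : ℝ} (ha : 0 < a) (hb : 0 < b) (hab : a + b = 1) (n : ℕ) :
    PLProp a b (Fin n → ℝ) := by
  induction n with
  | zero =>
    intro f g h hf hg hh H
    rw [lintegral_unique, lintegral_unique, lintegral_unique]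
    have hv : (volume : Measure (Fin 0 → ℝ)) univ = 1 := by
      rw [Measure.volume_pi_eq_dirac 0]; simp
    simp only [hv, mul_one]
    refine (H _ _).trans (le_of_eq ?_)
    congr 1
    exact Subsingleton.elim _ _
  | succ n ih =>
    have := (pl_one ha hb hab).prod ih
    refine this.transfer (MeasurableEquiv.piFinSuccAbove (fun _ => ℝ) 0).symm
      (volume_preserving_piFinSuccAbove (fun _ : Fin (n + 1) => ℝ) 0).symm ?_
    intro x y
    apply (MeasurableEquiv.piFinSuccAbove (fun _ : Fin (n + 1) => ℝ) 0).injective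
    rw [MeasurableEquiv.apply_symm_apply]
    have e1 := (MeasurableEquiv.piFinSuccAbove (fun _ : Fin (n + 1) => ℝ) 0).apply_symm_apply x
    have e2 := (MeasurableEquiv.piFinSuccAbove (fun _ : Fin (n + 1) => ℝ) 0).apply_symm_apply y
    nth_rewrite 1 [← e1, ← e2]
    rfl

lemma pl_euclidean {a b : ℝ} (ha : 0 < a) (hb : 0 < b) (hab : a + b = 1) (n : ℕ) :
    PLProp a b (EuclideanSpace ℝ (Fin n)) :=
  (pl_pi ha hb hab n).transfer (MeasurableEquiv.toLp 2 (Fin n → ℝ))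
    (PiLp.volume_preserving_toLp (Fin n)) fun _ _ => rfl

lemma norm_sq_convex {d : ℕ} {a b : ℝ} (ha : 0 < a) (hb : 0 < b) (hab : a + b = 1)
    (u v : EuclideanSpace ℝ (Fin d)) :
    ‖a • u + b • v‖ ^ 2 ≤ a * ‖u‖ ^ 2 + b * ‖v‖ ^ 2 := by
  have h1 := norm_add_sq_real (a • u) (b • v)
  have h2 := norm_sub_sq_real u v
  rw [inner_smul_left, inner_smul_right, norm_smul, norm_smul, mul_pow, mul_pow] at h1
  simp only [Real.norm_eq_abs, sq_abs, conj_trivial] at h1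
  have h3 : 0 ≤ a * b * ‖u - v‖ ^ 2 := by positivity
  rw [h2] at h3
  rw [h1]
  obtain rfl : b = 1 - a := by linarith
  nlinarith

lemma quad_identity {d : ℕ} {m w C : ℝ} (hw : 0 < w) (hC : 0 < C)
    (x y : EuclideanSpace ℝ (Fin d)) :
    -‖y - m • x‖ ^ 2 / (2 * w) - C / 2 * ‖x‖ ^ 2 + ‖y‖ ^ 2 / (2 * (m ^ 2 / C + w)) =
      -((m ^ 2 / w + C) / 2) * ‖x - (m / (m ^ 2 + C * w)) • y‖ ^ 2 := by
  have h1 := norm_sub_sq_real y (m • x)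
  have h2 := norm_sub_sq_real x ((m / (m ^ 2 + C * w)) • y)
  rw [inner_smul_right, norm_smul, mul_pow] at h1 h2
  simp only [Real.norm_eq_abs, sq_abs] at h1 h2
  rw [h1, h2, real_inner_comm y x]
  have h3 : 0 < m ^ 2 + C * w := by positivity
  have h4 : m ^ 2 / C + w = (m ^ 2 + C * w) / C := by field_simp
  rw [h4]
  field_simp
  ring

/-- The tilted marginal is log-concave (Prékopa). -/
lemma log_tilted_concave {d : ℕ} {m w C : ℝ} (hw : 0 < w) (hC : 0 < C)
    (p0 : EuclideanSpace ℝ (Fin d) → ℝ) (hp0pos : ∀ x, 0 < p0 x)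
    (hp0int : Integrable p0) (hconc : StronglyConcave d C fun x => Real.log (p0 x)) :
    (∀ y, 0 < ∫ x, Real.exp (-‖y - m • x‖ ^ 2 / (2 * w)) * p0 x) ∧
    ConcaveOn ℝ univ fun y => Real.log (∫ x, Real.exp (-‖y - m • x‖ ^ 2 / (2 * w)) * p0 x) +
      ‖y‖ ^ 2 / (2 * (m ^ 2 / C + w)) := by
  set V := m ^ 2 / C + w with hV
  set G : EuclideanSpace ℝ (Fin d) → ℝ := fun x => Real.log (p0 x) + C / 2 * ‖x‖ ^ 2 with hG
  have hGc : ConcaveOn ℝ univ G := hconc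
  have hGcont : Continuous G := continuousOn_univ.1 (hGc.continuousOn isOpen_univ)
  have hp0eq : ∀ x, p0 x = Real.exp (G x - C / 2 * ‖x‖ ^ 2) := by
    intro x; simp [hG, Real.exp_log (hp0pos x)]
  have hp0cont : Continuous p0 := by
    rw [funext hp0eq]; fun_prop
  have hcont : ∀ y, Continuous fun x => Real.exp (-‖y - m • x‖ ^ 2 / (2 * w)) * p0 x := by
    intro y; fun_prop
  have hint : ∀ y, Integrable fun x => Real.exp (-‖y - m • x‖ ^ 2 / (2 * w)) * p0 x := by
    intro y
    refine hp0int.mono' (hcont y).aestronglyMeasurable (Filter.Eventually.of_forall fun x => ?_)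
    rw [Real.norm_eq_abs, abs_of_nonneg (mul_nonneg (Real.exp_pos _).le (hp0pos x).le)]
    refine mul_le_of_le_one_left (hp0pos x).le ?_
    rw [Real.exp_le_one_iff, neg_div]
    have : 0 ≤ ‖y - m • x‖ ^ 2 / (2 * w) := by positivity
    linarith
  have hIpos : ∀ y, 0 < ∫ x, Real.exp (-‖y - m • x‖ ^ 2 / (2 * w)) * p0 x := by
    intro y
    have hpos : ∀ x, 0 < Real.exp (-‖y - m • x‖ ^ 2 / (2 * w)) * p0 x :=
      fun x => mul_pos (Real.exp_pos _) (hp0pos x)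
    rw [integral_pos_iff_support_of_nonneg (fun x => (hpos x).le) (hint y)]
    have : Function.support (fun x => Real.exp (-‖y - m • x‖ ^ 2 / (2 * w)) * p0 x) = univ := by
      ext x; simpa using (hpos x).ne'
    rw [this]
    exact isOpen_univ.measure_pos _ univ_nonempty
  refine ⟨hIpos, ?_⟩
  set K := m ^ 2 / w + C with hK
  have hKpos : 0 < K := by positivity
  set l := m / (m ^ 2 + C * w) with hl
  set q : EuclideanSpace ℝ (Fin d) → EuclideanSpace ℝ (Fin d) → ℝ :=
    fun y x => Real.exp (G x - K / 2 * ‖x - l • y‖ ^ 2) with hq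
  have hqeq : ∀ y x, q y x =
      Real.exp (‖y‖ ^ 2 / (2 * V)) * (Real.exp (-‖y - m • x‖ ^ 2 / (2 * w)) * p0 x) := by
    intro y x
    rw [hp0eq, ← Real.exp_add, ← Real.exp_add]
    simp only [hq]
    congr 1
    have := quad_identity (m := m) hw hC x y
    rw [← hV, ← hK, ← hl] at this
    linarith
  have hqint : ∀ y, Integrable (q y) := by
    intro y
    rw [funext (hqeq y)]
    exact (hint y).const_mul _
  have hF : ∀ y, ∫ x, q y x = Real.exp (‖y‖ ^ 2 / (2 * V)) *
      ∫ x, Real.exp (-‖y - m • x‖ ^ 2 / (2 * w)) * p0 x := by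
    intro y
    rw [← integral_const_mul]
    exact integral_congr_ae (Filter.Eventually.of_forall (hqeq y))
  have hFpos : ∀ y, 0 < ∫ x, q y x := fun y => by
    rw [hF]; exact mul_pos (Real.exp_pos _) (hIpos y)
  have hlog : ∀ y, Real.log (∫ x, Real.exp (-‖y - m • x‖ ^ 2 / (2 * w)) * p0 x) +
      ‖y‖ ^ 2 / (2 * V) = Real.log (∫ x, q y x) := by
    intro y
    rw [hF, Real.log_mul (Real.exp_pos _).ne' (hIpos y).ne', Real.log_exp, add_comm]
  rw [funext hlog]
  rw [concaveOn_iff_forall_pos]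
  refine ⟨convex_univ, ?_⟩
  intro y₁ _ y₂ _ a b ha hb hab
  have hqm : ∀ y, Measurable fun x => ENNReal.ofReal (q y x) := by
    intro y
    have : Continuous (q y) := by simp only [hq]; fun_prop
    exact this.measurable.ennreal_ofReal
  have hpl := pl_euclidean ha hb hab d (fun x => ENNReal.ofReal (q y₁ x))
    (fun x => ENNReal.ofReal (q y₂ x)) (fun x => ENNReal.ofReal (q (a • y₁ + b • y₂) x))
    (hqm _) (hqm _) (hqm _) (by
      intro x₁ x₂
      rw [ENNReal.ofReal_rpow_of_pos (Real.exp_pos _), ENNReal.ofReal_rpow_of_pos (Real.exp_pos _),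
        ← ENNReal.ofReal_mul (Real.rpow_nonneg (Real.exp_pos _).le _)]
      refine ENNReal.ofReal_le_ofReal ?_
      simp only [hq]
      rw [← Real.exp_mul, ← Real.exp_mul, ← Real.exp_add, Real.exp_le_exp]
      have h1 := hGc.2 (mem_univ x₁) (mem_univ x₂) ha.le hb.le hab
      have h2 := norm_sq_convex ha hb hab (x₁ - l • y₁) (x₂ - l • y₂)
      have h3 : a • (x₁ - l • y₁) + b • (x₂ - l • y₂) =
          a • x₁ + b • x₂ - l • (a • y₁ + b • y₂) := by module
      rw [h3] at h2
      simp only [smul_eq_mul] at h1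
      have h4 := mul_le_mul_of_nonneg_left h2 (by positivity : 0 ≤ K / 2)
      linarith)
  have hnn : ∀ y, 0 ≤ᵐ[volume] q y :=
    fun y => Filter.Eventually.of_forall fun x => (Real.exp_pos _).le
  rw [← ofReal_integral_eq_lintegral_ofReal (hqint _) (hnn _),
    ← ofReal_integral_eq_lintegral_ofReal (hqint _) (hnn _),
    ← ofReal_integral_eq_lintegral_ofReal (hqint _) (hnn _),
    ENNReal.ofReal_rpow_of_pos (hFpos _), ENNReal.ofReal_rpow_of_pos (hFpos _),
    ← ENNReal.ofReal_mul (Real.rpow_nonneg (hFpos _).le _),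
    ENNReal.ofReal_le_ofReal_iff (hFpos _).le] at hpl
  have := Real.log_le_log
    (mul_pos (Real.rpow_pos_of_pos (hFpos y₁) a) (Real.rpow_pos_of_pos (hFpos y₂) b)) hpl
  rw [Real.log_mul (Real.rpow_pos_of_pos (hFpos y₁) a).ne' (Real.rpow_pos_of_pos (hFpos y₂) b).ne',
    Real.log_rpow (hFpos _), Real.log_rpow (hFpos _)] at this
  simpa only [smul_eq_mul] using this

/-- if `log p₀` is `C*`-strongly concave with `C* > 1/σ²`, then for
`t ∈ (0,T]` the function `log p̃_t` is `C_t`-strongly concave with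
`C_t = 1/(m_t²/C* + σ²(1−m_t²)) − 1/σ²`, and moreover `0 ≤ C_t ≤ C* − 1/σ²` on `[0,T]`. -/
theorem strong_logconcavity_propagation (d : ℕ) (hd : 1 ≤ d) (σ T : ℝ) (hσ : 0 < σ)
    (hT : 0 < T) (β : ℝ → ℝ) (hβc : ContinuousOn β (Icc 0 T))
    (hβpos : ∀ s ∈ Icc (0:ℝ) T, 0 < β s) (hβmono : MonotoneOn β (Icc 0 T))
    (p0 : EuclideanSpace ℝ (Fin d) → ℝ) (hp0pos : ∀ x, 0 < p0 x)
    (hp0int : Integrable p0) (hp0prob : ∫ x, p0 x = 1)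
    (Cstar : ℝ) (hCstar : 1 / σ ^ 2 < Cstar)
    (hconc : StronglyConcave d Cstar fun x => Real.log (p0 x)) :
    (∀ t ∈ Ioc (0:ℝ) T,
        StronglyConcave d (concConst (σ ^ 2) β Cstar t) fun x =>
          Real.log (forwardDensity d (σ ^ 2) β p0 t x / gaussDensity d (σ ^ 2) x)) ∧
      ∀ t ∈ Icc (0:ℝ) T,
        0 ≤ concConst (σ ^ 2) β Cstar t ∧
          concConst (σ ^ 2) β Cstar t ≤ Cstar - 1 / σ ^ 2 := by
  have hσ2 : 0 < σ ^ 2 := by positivity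
  have hC : 0 < Cstar := lt_trans (by positivity) hCstar
  have hm0 : ∀ t, 0 < mcoef (σ ^ 2) β t := fun t => Real.exp_pos _
  have hm1 : ∀ t ∈ Icc (0:ℝ) T, mcoef (σ ^ 2) β t ≤ 1 := by
    intro t ht
    have h : 0 ≤ ∫ s in (0:ℝ)..t, β s :=
      intervalIntegral.integral_nonneg ht.1 fun s hs => (hβpos s ⟨hs.1, hs.2.trans ht.2⟩).le
    unfold mcoef
    rw [Real.exp_le_one_iff, neg_mul]
    have : 0 ≤ 1 / (2 * σ ^ 2) * ∫ s in (0:ℝ)..t, β s := mul_nonneg (by positivity) h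
    linarith
  have hm1' : ∀ t ∈ Ioc (0:ℝ) T, mcoef (σ ^ 2) β t < 1 := by
    intro t ht
    have hsub : Icc 0 t ⊆ Icc 0 T := Icc_subset_Icc_right ht.2
    have h : 0 < ∫ s in (0:ℝ)..t, β s := by
      refine intervalIntegral.intervalIntegral_pos_of_pos_on ?_
        (fun s hs => hβpos s (hsub (Ioo_subset_Icc_self hs))) ht.1
      refine ContinuousOn.intervalIntegrable ?_
      rw [uIcc_of_le ht.1.le]
      exact hβc.mono hsub
    unfold mcoef
    rw [Real.exp_lt_one_iff, neg_mul]
    have : 0 < 1 / (2 * σ ^ 2) * ∫ s in (0:ℝ)..t, β s := mul_pos (by positivity) h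
    linarith
  refine ⟨?_, ?_⟩
  · intro t ht
    have hmlt := hm1' t ht
    have hmp := hm0 t
    have hw : 0 < σ ^ 2 * (1 - mcoef (σ ^ 2) β t ^ 2) := by
      refine mul_pos hσ2 ?_
      nlinarith
    have hs : scoef (σ ^ 2) β t ^ 2 = σ ^ 2 * (1 - mcoef (σ ^ 2) β t ^ 2) :=
      Real.sq_sqrt hw.le
    obtain ⟨hIpos, hcc⟩ := log_tilted_concave (m := mcoef (σ ^ 2) β t) hw hC p0 hp0pos hp0int hconc
    unfold StronglyConcave
    have hc1 : 0 < (2 * π * (σ ^ 2 * (1 - mcoef (σ ^ 2) β t ^ 2))) ^ (-(d : ℝ) / 2) :=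
      Real.rpow_pos_of_pos (mul_pos (by positivity) hw) _
    have hc2 : 0 < (2 * π * σ ^ 2) ^ (-(d : ℝ) / 2) :=
      Real.rpow_pos_of_pos (by positivity) _
    refine (hcc.add_const
      (Real.log ((2 * π * (σ ^ 2 * (1 - mcoef (σ ^ 2) β t ^ 2))) ^ (-(d : ℝ) / 2)) -
        Real.log ((2 * π * σ ^ 2) ^ (-(d : ℝ) / 2)))).congr ?_
    intro y _
    simp only [Pi.add_apply, forwardDensity, gaussDensity, concConst, hs, mul_assoc _ (Real.exp _) (p0 _)]
    rw [integral_const_mul, Real.log_div (mul_pos hc1 (hIpos y)).ne'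
      (mul_pos hc2 (Real.exp_pos _)).ne', Real.log_mul hc1.ne' (hIpos y).ne',
      Real.log_mul hc2.ne' (Real.exp_pos _).ne', Real.log_exp]
    have hVpos : 0 < mcoef (σ ^ 2) β t ^ 2 / Cstar + σ ^ 2 * (1 - mcoef (σ ^ 2) β t ^ 2) := by
      positivity
    generalize mcoef (σ ^ 2) β t ^ 2 / Cstar + σ ^ 2 * (1 - mcoef (σ ^ 2) β t ^ 2) = V at hVpos ⊢
    generalize Real.log (∫ x : EuclideanSpace ℝ (Fin d), _) = I
    generalize Real.log ((2 * π * (_ * _)) ^ (-(d : ℝ) / 2)) = c1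
    generalize Real.log ((2 * π * σ ^ 2) ^ (-(d : ℝ) / 2)) = c2
    field_simp
    ring
  · intro t ht
    have hmle := hm1 t ht
    have hmp := hm0 t
    unfold concConst
    generalize mcoef (σ ^ 2) β t = m at *
    have hm2 : m ^ 2 ≤ 1 := by nlinarith
    have hinv : 1 / Cstar < σ ^ 2 := by
      rw [div_lt_iff₀ hσ2] at hCstar
      rw [div_lt_iff₀ hC]
      linarith
    have e : m ^ 2 / Cstar = m ^ 2 * (1 / Cstar) := by ring
    have hCi : 0 < 1 / Cstar := by positivity
    have hV1 : m ^ 2 / Cstar + σ ^ 2 * (1 - m ^ 2) ≤ σ ^ 2 := by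
      rw [e]; nlinarith [sq_nonneg m]
    have hV2 : 1 / Cstar ≤ m ^ 2 / Cstar + σ ^ 2 * (1 - m ^ 2) := by
      rw [e]; nlinarith [sq_nonneg m]
    have hVpos := lt_of_lt_of_le hCi hV2
    constructor
    · have := one_div_le_one_div_of_le hVpos hV1
      linarith
    · have := one_div_le_one_div_of_le hCi hV2
      rw [one_div_one_div] at this
      linarith
end
end

section
/- Let μ be a probability measure on ℝ^d with W₂²(μ, γ_{σ²}) < ∞, and let μ_T be its forward marginal at time T. Then W₂²(μ_T, γ_{σ²}) ≤ W₂²(μ, γ_{σ²}) · exp( −(1/σ²) ∫₀^T β(t) dt ). -/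
open MeasureTheory Real Set
open scoped ENNReal

noncomputable section

/-- The Gaussian measure `γ_{σ²} = N(0, σ² I_d)` on `ℝ^d`. -/
def gaussMeasure (d : ℕ) (σ2 : ℝ) : Measure (EuclideanSpace ℝ (Fin d)) :=
  volume.withDensity fun x => ENNReal.ofReal (gaussDensity d σ2 x)

/-- The forward marginal `μ_t`: the law of `m_t X + σ_t Z` where `X ∼ μ` and
`Z ∼ N(0, I_d)` are independent. -/
def forwardMarginal (d : ℕ) (σ2 : ℝ) (β : ℝ → ℝ) (μ : Measure (EuclideanSpace ℝ (Fin d)))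
    (t : ℝ) : Measure (EuclideanSpace ℝ (Fin d)) :=
  Measure.map (fun p : EuclideanSpace ℝ (Fin d) × EuclideanSpace ℝ (Fin d) =>
    mcoef σ2 β t • p.1 + scoef σ2 β t • p.2) (μ.prod (gaussMeasure d 1))

open ProbabilityTheory in
lemma charFun_gaussMeasure (d : ℕ) (s : ℝ) (hs : 0 < s) (t : EuclideanSpace ℝ (Fin d)) :
    charFun (gaussMeasure d s) t = Complex.exp (-(s * ‖t‖ ^ 2 / 2 : ℝ)) := by
  have hmeas : Measurable (gaussDensity d s) := by
    unfold gaussDensity; fun_prop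
  have hpos : ∀ x, 0 ≤ gaussDensity d s x := fun x => by
    unfold gaussDensity; positivity
  rw [charFun_apply, gaussMeasure, integral_withDensity_eq_integral_toReal_smul
    hmeas.ennreal_ofReal (by simp)]
  have key := GaussianFourier.integral_cexp_neg_mul_sq_norm_add
    (V := EuclideanSpace ℝ (Fin d)) (b := (1 / (2 * s) : ℝ)) (by
      rw [Complex.ofReal_re]; positivity) Complex.I t
  have h1 : ∀ x : EuclideanSpace ℝ (Fin d),
      (ENNReal.ofReal (gaussDensity d s x)).toReal • Complex.exp ((inner ℝ x t : ℝ) * Complex.I)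
      = (((2 * π * s) ^ (-(d : ℝ) / 2) : ℝ) : ℂ) *
        Complex.exp (-((1 / (2 * s) : ℝ) : ℂ) * ‖x‖ ^ 2 + Complex.I * (inner ℝ t x : ℝ)) := by
    intro x
    rw [ENNReal.toReal_ofReal (hpos x), gaussDensity, Complex.real_smul, Complex.ofReal_mul,
      Complex.ofReal_exp, mul_assoc, ← Complex.exp_add, real_inner_comm]
    congr 2
    push_cast
    ring
  simp_rw [h1]
  rw [integral_const_mul, key, ← mul_assoc]
  have h2 : (((2 * π * s) ^ (-(d : ℝ) / 2) : ℝ) : ℂ) *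
      ((π : ℂ) / ((1 / (2 * s) : ℝ) : ℂ)) ^
        ((Module.finrank ℝ (EuclideanSpace ℝ (Fin d)) : ℂ) / 2) = 1 := by
    have h3 : (π : ℂ) / ((1 / (2 * s) : ℝ) : ℂ) = ((2 * π * s : ℝ) : ℂ) := by
      rw [← Complex.ofReal_div]; congr 1; field_simp
    have h4 : ((Module.finrank ℝ (EuclideanSpace ℝ (Fin d)) : ℂ) / 2) = (((d : ℝ) / 2 : ℝ) : ℂ) := by
      rw [finrank_euclideanSpace_fin]; push_cast; rfl
    rw [h3, h4, ← Complex.ofReal_cpow (by positivity), ← Complex.ofReal_mul,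
      ← Real.rpow_add (by positivity)]
    simp [neg_div]
  rw [h2, one_mul]
  congr 1
  have : (s : ℂ) ≠ 0 := by exact_mod_cast hs.ne'
  rw [Complex.I_sq]
  push_cast
  field_simp
  ring

lemma isProb_gaussMeasure (d : ℕ) (s : ℝ) (hs : 0 < s) :
    IsProbabilityMeasure (gaussMeasure d s) := by
  have h := charFun_gaussMeasure d s hs 0
  rw [charFun_zero] at h
  simp only [norm_zero] at h
  norm_num at h
  refine ⟨?_⟩
  rw [measureReal_def] at h
  exact (ENNReal.toReal_eq_one_iff _).1 (by exact_mod_cast h)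

lemma gauss_invariant (d : ℕ) (v m s : ℝ) (hv : 0 < v) (h : s ^ 2 = v * (1 - m ^ 2)) :
    Measure.map (fun p : EuclideanSpace ℝ (Fin d) × EuclideanSpace ℝ (Fin d) =>
      m • p.1 + s • p.2) ((gaussMeasure d v).prod (gaussMeasure d 1)) = gaussMeasure d v := by
  have := isProb_gaussMeasure d v hv
  have := isProb_gaussMeasure d 1 one_pos
  have e : Measure.map (fun p : EuclideanSpace ℝ (Fin d) × EuclideanSpace ℝ (Fin d) =>
      m • p.1 + s • p.2) ((gaussMeasure d v).prod (gaussMeasure d 1)) =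
      ((gaussMeasure d v).map (m • ·)) ∗ ((gaussMeasure d 1).map (s • ·)) := by
    rw [Measure.conv, Measure.map_prod_map _ _ (by fun_prop) (by fun_prop),
      Measure.map_map (by fun_prop) (by fun_prop)]
    rfl
  rw [e]
  have : IsFiniteMeasure ((gaussMeasure d v).map (m • ·)) := inferInstance
  have : IsFiniteMeasure ((gaussMeasure d 1).map (s • ·)) := inferInstance
  apply Measure.ext_of_charFun
  ext t
  rw [charFun_conv, charFun_map_smul, charFun_map_smul, charFun_gaussMeasure d v hv,
    charFun_gaussMeasure d v hv, charFun_gaussMeasure d 1 one_pos, ← Complex.exp_add]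
  congr 1
  rw [← Complex.ofReal_neg, ← Complex.ofReal_neg, ← Complex.ofReal_add, ← Complex.ofReal_neg]
  congr 1
  rw [norm_smul, norm_smul, mul_pow, mul_pow, Real.norm_eq_abs, Real.norm_eq_abs, sq_abs, sq_abs, h]
  ring

/-- exponential contraction of the squared 2-Wasserstein distance along the
forward flow: `W₂²(μ_T, γ_{σ²}) ≤ W₂²(μ, γ_{σ²}) · exp(−(1/σ²) ∫₀^T β(t) dt)`. -/
theorem w2_forward_contraction (d : ℕ) (hd : 1 ≤ d) (σ T : ℝ) (hσ : 0 < σ) (hT : 0 < T)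
    (β : ℝ → ℝ) (hβc : ContinuousOn β (Icc 0 T)) (hβpos : ∀ t ∈ Icc (0:ℝ) T, 0 < β t)
    (hβmono : MonotoneOn β (Icc 0 T))
    (μ : Measure (EuclideanSpace ℝ (Fin d))) [IsProbabilityMeasure μ]
    (hfin : W2sq d μ (gaussMeasure d (σ ^ 2)) < ⊤) :
    W2sq d (forwardMarginal d (σ ^ 2) β μ T) (gaussMeasure d (σ ^ 2)) ≤
      W2sq d μ (gaussMeasure d (σ ^ 2)) *
        ENNReal.ofReal (Real.exp (-(1 / σ ^ 2) * ∫ t in (0:ℝ)..T, β t)) := by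
  set v := σ ^ 2 with hvdef
  have hv : 0 < v := by positivity
  set m := mcoef v β T with hm
  set s := scoef v β T with hsd
  have := isProb_gaussMeasure d v hv
  have := isProb_gaussMeasure d 1 one_pos
  have hint : 0 ≤ ∫ t in (0:ℝ)..T, β t :=
    intervalIntegral.integral_nonneg hT.le fun t ht => (hβpos t ht).le
  have hm0 : 0 < m := Real.exp_pos _
  have hm1 : m ≤ 1 := by
    rw [hm, mcoef, Real.exp_le_one_iff]
    have : 0 ≤ 1 / (2 * v) := by positivity
    nlinarith
  have hs2 : s ^ 2 = v * (1 - m ^ 2) := by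
    rw [hsd, scoef, Real.sq_sqrt]
    have : m ^ 2 ≤ 1 := pow_le_one₀ hm0.le hm1
    exact mul_nonneg hv.le (by linarith)
  have hexp : Real.exp (-(1 / v) * ∫ t in (0:ℝ)..T, β t) = m ^ 2 := by
    rw [hm, mcoef, ← Real.exp_nat_mul]
    congr 1
    push_cast
    field_simp
  rw [hexp]
  have hK0 : ENNReal.ofReal (m ^ 2) ≠ 0 := by
    simp only [ne_eq, ENNReal.ofReal_eq_zero, not_le]; positivity
  rw [W2sq.eq_def d μ, ENNReal.iInf_mul_of_ne hK0 ENNReal.ofReal_ne_top]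
  refine le_iInf fun c => ?_
  rw [ENNReal.iInf_mul_of_ne hK0 ENNReal.ofReal_ne_top]
  refine le_iInf fun hc1 => ?_
  rw [ENNReal.iInf_mul_of_ne hK0 ENNReal.ofReal_ne_top]
  refine le_iInf fun hc2 => ?_
  have : IsProbabilityMeasure c := by
    refine ⟨?_⟩
    have h : (c.map Prod.fst) univ = 1 := by rw [hc1]; exact measure_univ
    rwa [Measure.map_apply measurable_fst MeasurableSet.univ, preimage_univ] at h
  let E := EuclideanSpace ℝ (Fin d)
  let F : (E × E) × E → E × E := fun q => (m • q.1.1 + s • q.2, m • q.1.2 + s • q.2)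
  have hF : Measurable F := by fun_prop
  have hG : Measurable (fun p : E × E => m • p.1 + s • p.2) := by fun_prop
  have hfst : ((c.prod (gaussMeasure d 1)).map F).map Prod.fst = forwardMarginal d v β μ T := by
    have hp : μ.prod (gaussMeasure d 1) =
        (c.prod (gaussMeasure d 1)).map (Prod.map Prod.fst id) := by
      rw [← Measure.map_prod_map _ _ measurable_fst measurable_id, hc1, Measure.map_id]
    rw [forwardMarginal, hp, Measure.map_map measurable_fst hF,
      Measure.map_map hG (by fun_prop)]
    rfl
  have hsnd : ((c.prod (gaussMeasure d 1)).map F).map Prod.snd = gaussMeasure d v := by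
    have hp : (gaussMeasure d v).prod (gaussMeasure d 1) =
        (c.prod (gaussMeasure d 1)).map (Prod.map Prod.snd id) := by
      rw [← Measure.map_prod_map _ _ measurable_snd measurable_id, hc2, Measure.map_id]
    rw [← gauss_invariant d v m s hv hs2, hp, Measure.map_map measurable_snd hF,
      Measure.map_map hG (by fun_prop)]
    rfl
  rw [W2sq]
  refine (iInf_le _ ((c.prod (gaussMeasure d 1)).map F)).trans ?_
  refine (iInf_le _ hfst).trans ?_
  refine (iInf_le _ hsnd).trans (le_of_eq ?_)
  rw [lintegral_map (by fun_prop) hF]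
  have hcost : ∀ q : (E × E) × E, ENNReal.ofReal (‖(F q).1 - (F q).2‖ ^ 2) =
      ENNReal.ofReal (‖q.1.1 - q.1.2‖ ^ 2) * ENNReal.ofReal (m ^ 2) := by
    intro q
    rw [← ENNReal.ofReal_mul (by positivity)]
    simp only [F, add_sub_add_right_eq_sub, ← smul_sub, norm_smul, Real.norm_eq_abs, mul_pow,
      sq_abs]
    rw [mul_comm]
  simp_rw [hcost]
  rw [lintegral_mul_const _ (by fun_prop), lintegral_prod _ (by fun_prop)]
  simp only [lintegral_const, measure_univ, mul_one]
end
end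

section
/- There exists a universal constant C > 0 (independent of d, σ, T, t, β and p₀) with the following property: for every d ≥ 1, σ > 0, T > 0, every continuous, positive, non-decreasing noise schedule β on [0,T], every t ∈ (0, T], and every probability density p₀ on ℝ^d with ∫‖x‖⁴ p₀(x) dx < ∞, the forward marginal density p_t satisfies ∫_{ℝ^d} ‖ ∇ log p_t(x) + x/σ² ‖⁴ p_t(x) dx ≤ C ( σ_t^{−4} ∫_{ℝ^d} ‖z‖⁴ dγ_d(z) + σ^{−8} ∫_{ℝ^d} ‖x‖⁴ p₀(x) dx ), where γ_d = N(0, I_d) is the standard Gaussian measure on ℝ^d. -/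
open MeasureTheory Real Set
open scoped ENNReal

noncomputable section

/-- Density of the standard Gaussian `N(0, I_d)` on `ℝ^d`. -/
def stdGaussDensity (d : ℕ) (x : EuclideanSpace ℝ (Fin d)) : ℝ :=
  (2 * π) ^ (-(d : ℝ) / 2) * Real.exp (-‖x‖ ^ 2 / 2)

/-- The standard Gaussian measure `γ_d = N(0, I_d)` on `ℝ^d`. -/
def stdGaussMeasure (d : ℕ) : Measure (EuclideanSpace ℝ (Fin d)) :=
  volume.withDensity fun x => ENNReal.ofReal (stdGaussDensity d x)

/-- The Gaussian kernel with centre `a` and scale `s`. -/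
def gk (d : ℕ) (s : ℝ) (a y : EuclideanSpace ℝ (Fin d)) : ℝ :=
  (2 * π * s ^ 2) ^ (-(d : ℝ) / 2) * Real.exp (-‖y - a‖ ^ 2 / (2 * s ^ 2))

lemma gk_const_pos (d : ℕ) {s : ℝ} (hs : 0 < s) : 0 < (2 * π * s ^ 2) ^ (-(d : ℝ) / 2) := by
  positivity

lemma gk_pos {d : ℕ} {s : ℝ} (hs : 0 < s) (a y : EuclideanSpace ℝ (Fin d)) : 0 < gk d s a y := by
  unfold gk; positivity

lemma gk_eq {d : ℕ} {s : ℝ} (hs : 0 < s) (a y : EuclideanSpace ℝ (Fin d)) :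
    gk d s a y = (s⁻¹) ^ d * stdGaussDensity d (s⁻¹ • (y - a)) := by
  unfold gk stdGaussDensity
  have h1 : (2 * π * s ^ 2) ^ (-(d : ℝ) / 2) = (s⁻¹) ^ d * (2 * π) ^ (-(d : ℝ) / 2) := by
    rw [Real.mul_rpow (by positivity) (by positivity), mul_comm]
    congr 1
    rw [← Real.rpow_natCast s 2, ← Real.rpow_mul hs.le, ← Real.rpow_natCast,
      ← Real.rpow_neg_one s, ← Real.rpow_mul hs.le]
    congr 1
    push_cast; ring
  have h2 : -‖y - a‖ ^ 2 / (2 * s ^ 2) = -‖s⁻¹ • (y - a)‖ ^ 2 / 2 := by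
    rw [norm_smul, Real.norm_eq_abs, abs_of_pos (inv_pos.2 hs)]
    field_simp
  rw [h1, h2]; ring

lemma measurable_stdGaussDensity (d : ℕ) : Measurable (stdGaussDensity d) := by
  unfold stdGaussDensity; fun_prop

lemma lintegral_gk {d : ℕ} {s : ℝ} (hs : 0 < s) (a : EuclideanSpace ℝ (Fin d))
    (f : EuclideanSpace ℝ (Fin d) → ℝ≥0∞) (hf : Measurable f) :
    ∫⁻ y, f (s⁻¹ • (y - a)) * ENNReal.ofReal (gk d s a y) =
      ∫⁻ z, f z ∂(stdGaussMeasure d) := by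
  have hm := measurable_stdGaussDensity d
  let H : EuclideanSpace ℝ (Fin d) → ℝ≥0∞ := fun z =>
    ENNReal.ofReal ((s⁻¹) ^ d) * (ENNReal.ofReal (stdGaussDensity d z) * f z)
  have hH : Measurable H := by fun_prop
  have e1 : ∀ y, f (s⁻¹ • (y - a)) * ENNReal.ofReal (gk d s a y) = H (s⁻¹ • (y - a)) := by
    intro y
    simp only [H]
    rw [gk_eq hs, ENNReal.ofReal_mul (by positivity)]
    ring
  simp_rw [e1]
  rw [lintegral_sub_right_eq_self (fun y => H (s⁻¹ • y)) a]
  have hsi : s⁻¹ ≠ 0 := (inv_pos.2 hs).ne'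
  rw [← lintegral_map (μ := volume) (f := H) (g := fun y => s⁻¹ • y) hH (by fun_prop),
    Measure.map_addHaar_smul volume hsi, lintegral_smul_measure]
  simp only [H]
  rw [lintegral_const_mul _ (by fun_prop), stdGaussMeasure,
    lintegral_withDensity_eq_lintegral_mul _ (by fun_prop) hf, smul_eq_mul, ← mul_assoc,
    ← ENNReal.ofReal_mul (by positivity), finrank_euclideanSpace_fin, abs_of_pos (by positivity),
    inv_mul_cancel₀ (by positivity)]
  simp

lemma stdGauss_univ (d : ℕ) : ∫⁻ _, 1 ∂(stdGaussMeasure d) = 1 := by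
  have hm := measurable_stdGaussDensity d
  have hnn : ∀ x, 0 ≤ stdGaussDensity d x := fun x => by unfold stdGaussDensity; positivity
  rw [stdGaussMeasure, lintegral_withDensity_eq_lintegral_mul _ (by fun_prop) measurable_const]
  simp only [Pi.mul_apply, mul_one]
  have key : ∫ x, stdGaussDensity d x = 1 := by
    unfold stdGaussDensity
    rw [integral_const_mul]
    have := GaussianFourier.integral_rexp_neg_mul_sq_norm (V := EuclideanSpace ℝ (Fin d))
      (b := 1 / 2) (by norm_num)
    have e : (fun x : EuclideanSpace ℝ (Fin d) => Real.exp (-‖x‖ ^ 2 / 2)) =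
        fun x => Real.exp (-(1 / 2) * ‖x‖ ^ 2) := by
      ext x; congr 1; ring
    rw [e, this, finrank_euclideanSpace_fin, show π / (1 / 2) = 2 * π by ring,
      ← Real.rpow_add (by positivity)]
    simp [neg_div]
  rw [← ofReal_integral_eq_lintegral_ofReal _ (Filter.Eventually.of_forall hnn), key]
  · simp
  · by_contra h
    rw [integral_undef h] at key
    norm_num at key

lemma exp_bound {s u : ℝ} (hs : 0 < s) : u * Real.exp (-u ^ 2 / (2 * s ^ 2)) ≤ s := by
  have h1 : u / s ≤ Real.exp (u ^ 2 / (2 * s ^ 2)) := by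
    have := Real.add_one_le_exp (u ^ 2 / (2 * s ^ 2))
    have e : u ^ 2 / (2 * s ^ 2) = (u / s) ^ 2 / 2 := by field_simp
    rw [e] at this ⊢
    nlinarith [sq_nonneg (u / s - 1)]
  rw [neg_div, Real.exp_neg, ← div_eq_mul_inv, div_le_iff₀ (Real.exp_pos _)]
  rw [div_le_iff₀ hs] at h1
  linarith

lemma gk_le {d : ℕ} {s : ℝ} (hs : 0 < s) (a y : EuclideanSpace ℝ (Fin d)) :
    gk d s a y ≤ (2 * π * s ^ 2) ^ (-(d : ℝ) / 2) := by
  unfold gk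
  have : Real.exp (-‖y - a‖ ^ 2 / (2 * s ^ 2)) ≤ 1 := by
    rw [Real.exp_le_one_iff, neg_div]
    have : 0 ≤ ‖y - a‖ ^ 2 / (2 * s ^ 2) := by positivity
    linarith
  have h0 := gk_const_pos d hs
  nlinarith

lemma gk_mul_le {d : ℕ} {s : ℝ} (hs : 0 < s) (a y : EuclideanSpace ℝ (Fin d)) :
    gk d s a y * ‖y - a‖ ≤ (2 * π * s ^ 2) ^ (-(d : ℝ) / 2) * s := by
  unfold gk
  have := exp_bound (u := ‖y - a‖) hs
  have h0 := gk_const_pos d hs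
  nlinarith

lemma gk_hasFDerivAt {d : ℕ} {s : ℝ} (hs : 0 < s) (a y : EuclideanSpace ℝ (Fin d)) (p : ℝ) :
    HasFDerivAt (fun y => gk d s a y * p)
      (innerSL ℝ ((-(gk d s a y * p / s ^ 2)) • (y - a))) y := by
  unfold gk
  have h := (((hasFDerivAt_id y).sub_const a).norm_sq.neg.mul_const (2 * s ^ 2)⁻¹).exp.const_mul
    ((2 * π * s ^ 2) ^ (-(d : ℝ) / 2)) |>.mul_const p
  simp only [div_eq_mul_inv _ (2 * s ^ 2)]
  refine (h.congr_fderiv ?_)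
  ext v
  simp [inner_smul_left]
  field_simp

section main
variable {d : ℕ} {s m : ℝ} {p0 : EuclideanSpace ℝ (Fin d) → ℝ}

lemma measurable_gk2 : Measurable (fun q : EuclideanSpace ℝ (Fin d) × EuclideanSpace ℝ (Fin d) =>
    gk d s (m • q.1) q.2) := by
  unfold gk; fun_prop

lemma measurable_gk1 (y : EuclideanSpace ℝ (Fin d)) :
    Measurable (fun x => gk d s (m • x) y) := by
  unfold gk; fun_prop

lemma integrable_gk (hs : 0 < s) (hm : Measurable p0) (h0 : ∀ x, 0 ≤ p0 x) (hi : Integrable p0)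
    (y : EuclideanSpace ℝ (Fin d)) : Integrable (fun x => gk d s (m • x) y * p0 x) := by
  have := measurable_gk1 (d := d) (s := s) (m := m) y
  refine (hi.const_mul ((2 * π * s ^ 2) ^ (-(d : ℝ) / 2))).mono'
    (by fun_prop) (Filter.Eventually.of_forall fun x => ?_)
  rw [Real.norm_of_nonneg (mul_nonneg (gk_pos hs _ _).le (h0 x))]
  exact mul_le_mul_of_nonneg_right (gk_le hs _ _) (h0 x)

lemma norm_G_le (hs : 0 < s) (h0 : ∀ x, 0 ≤ p0 x) (x y : EuclideanSpace ℝ (Fin d)) :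
    ‖(-(gk d s (m • x) y * p0 x / s ^ 2)) • (y - m • x)‖ ≤
      ((2 * π * s ^ 2) ^ (-(d : ℝ) / 2) * s / s ^ 2) * p0 x := by
  rw [norm_smul, norm_neg, Real.norm_of_nonneg
    (div_nonneg (mul_nonneg (gk_pos hs _ _).le (h0 x)) (by positivity))]
  have := gk_mul_le hs (m • x) y
  calc gk d s (m • x) y * p0 x / s ^ 2 * ‖y - m • x‖
      = (gk d s (m • x) y * ‖y - m • x‖) * (p0 x / s ^ 2) := by ring
    _ ≤ ((2 * π * s ^ 2) ^ (-(d : ℝ) / 2) * s) * (p0 x / s ^ 2) :=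
        mul_le_mul_of_nonneg_right this (div_nonneg (h0 x) (by positivity))
    _ = _ := by ring

lemma integrable_G (hs : 0 < s) (hm : Measurable p0) (h0 : ∀ x, 0 ≤ p0 x) (hi : Integrable p0)
    (y : EuclideanSpace ℝ (Fin d)) :
    Integrable (fun x => (-(gk d s (m • x) y * p0 x / s ^ 2)) • (y - m • x)) := by
  have := measurable_gk1 (d := d) (s := s) (m := m) y
  refine (hi.const_mul _).mono' ?_ (Filter.Eventually.of_forall fun x => norm_G_le hs h0 x y)
  apply Measurable.aestronglyMeasurable
  fun_prop

lemma hasFDerivAt_q (hs : 0 < s) (hm : Measurable p0) (h0 : ∀ x, 0 ≤ p0 x) (hi : Integrable p0)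
    (y : EuclideanSpace ℝ (Fin d)) :
    HasFDerivAt (fun y => ∫ x, gk d s (m • x) y * p0 x)
      (innerSL ℝ (∫ x, (-(gk d s (m • x) y * p0 x / s ^ 2)) • (y - m • x))) y := by
  have h := hasFDerivAt_integral_of_dominated_of_fderiv_le (𝕜 := ℝ) (μ := volume) (s := univ)
    (x₀ := y)
    (F := fun y x => gk d s (m • x) y * p0 x)
    (F' := fun y x => innerSL ℝ ((-(gk d s (m • x) y * p0 x / s ^ 2)) • (y - m • x)))
    (bound := fun x => ((2 * π * s ^ 2) ^ (-(d : ℝ) / 2) * s / s ^ 2) * p0 x)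
    Filter.univ_mem
    (Filter.Eventually.of_forall fun y => (integrable_gk hs hm h0 hi y).aestronglyMeasurable)
    (integrable_gk hs hm h0 hi y)
    (((innerSL ℝ).continuous.comp_aestronglyMeasurable
      (integrable_G hs hm h0 hi y).aestronglyMeasurable))
    (Filter.Eventually.of_forall fun x y _ => by
      rw [innerSL_apply_norm]; exact norm_G_le hs h0 x y)
    (hi.const_mul _)
    (Filter.Eventually.of_forall fun x y _ => gk_hasFDerivAt hs (m • x) y (p0 x))
  rwa [ContinuousLinearMap.integral_comp_comm (innerSL ℝ) (integrable_G hs hm h0 hi y)] at h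

lemma q_pos (hs : 0 < s) (hm : Measurable p0) (h0 : ∀ x, 0 ≤ p0 x) (hi : Integrable p0)
    (h1 : ∫ x, p0 x = 1) (y : EuclideanSpace ℝ (Fin d)) :
    0 < ∫ x, gk d s (m • x) y * p0 x := by
  rw [integral_pos_iff_support_of_nonneg (fun x => mul_nonneg (gk_pos hs _ _).le (h0 x))
    (integrable_gk hs hm h0 hi y)]
  have : Function.support (fun x => gk d s (m • x) y * p0 x) = Function.support p0 := by
    ext x; simp [(gk_pos hs (m • x) y).ne']
  rw [this, ← integral_pos_iff_support_of_nonneg h0 hi, h1]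
  norm_num

lemma gradient_log_q (hs : 0 < s) (hm : Measurable p0) (h0 : ∀ x, 0 ≤ p0 x) (hi : Integrable p0)
    (h1 : ∫ x, p0 x = 1) (y : EuclideanSpace ℝ (Fin d)) :
    gradient (fun y => Real.log (∫ x, gk d s (m • x) y * p0 x)) y =
      (∫ x, gk d s (m • x) y * p0 x)⁻¹ •
        ∫ x, (-(gk d s (m • x) y * p0 x / s ^ 2)) • (y - m • x) := by
  apply HasGradientAt.gradient
  rw [hasGradientAt_iff_hasFDerivAt]
  refine ((hasFDerivAt_q hs hm h0 hi y).log (q_pos hs hm h0 hi h1 y).ne').congr_fderiv ?_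
  ext v
  simp

lemma pow4_tangent {a b : ℝ} (ha : 0 ≤ a) (hb : 0 ≤ b) : 4 * b ^ 3 * a ≤ a ^ 4 + 3 * b ^ 4 := by
  nlinarith [mul_nonneg (sq_nonneg (a - b)) (by positivity : 0 ≤ a ^ 2 + 2 * a * b + 3 * b ^ 2)]

/-- weighted Jensen inequality for the fourth power of the norm -/
lemma jensen4 {k : EuclideanSpace ℝ (Fin d) → ℝ}
    {w : EuclideanSpace ℝ (Fin d) → EuclideanSpace ℝ (Fin d)}
    (hk : Measurable k) (hk0 : ∀ x, 0 ≤ k x) (hki : Integrable k)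
    (hwi : Integrable (fun x => k x • w x))
    (v : EuclideanSpace ℝ (Fin d)) (hv : (∫ x, k x) • v = ∫ x, k x • w x) :
    ENNReal.ofReal (‖v‖ ^ 4 * ∫ x, k x) ≤ ∫⁻ x, ENNReal.ofReal (‖w x‖ ^ 4 * k x) := by
  set q := ∫ x, k x with hq
  have hq0 : 0 ≤ q := integral_nonneg hk0
  have e1 : q * ‖v‖ ≤ ∫ x, ‖k x • w x‖ := by
    have := norm_integral_le_integral_norm (fun x => k x • w x) (μ := volume)
    rwa [← hv, norm_smul, Real.norm_of_nonneg hq0] at this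
  have e2 : ENNReal.ofReal (4 * ‖v‖ ^ 3 * (q * ‖v‖)) ≤
      ∫⁻ x, ENNReal.ofReal (4 * ‖v‖ ^ 3 * ‖k x • w x‖) := by
    rw [← ofReal_integral_eq_lintegral_ofReal (hwi.norm.const_mul _)
      (Filter.Eventually.of_forall fun x => by positivity), integral_const_mul]
    gcongr
  have e3 : ∫⁻ x, ENNReal.ofReal (4 * ‖v‖ ^ 3 * ‖k x • w x‖) ≤
      ∫⁻ x, (ENNReal.ofReal (‖w x‖ ^ 4 * k x) + ENNReal.ofReal (3 * ‖v‖ ^ 4 * k x)) := by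
    refine lintegral_mono fun x => ?_
    have hkx := hk0 x
    rw [← ENNReal.ofReal_add (by positivity) (by positivity)]
    apply ENNReal.ofReal_le_ofReal
    rw [norm_smul, Real.norm_of_nonneg hkx]
    have := mul_le_mul_of_nonneg_right
      (pow4_tangent (norm_nonneg (w x)) (norm_nonneg v)) hkx
    linarith
  rw [lintegral_add_right _ (by fun_prop), ← ofReal_integral_eq_lintegral_ofReal
      (f := fun x => 3 * ‖v‖ ^ 4 * k x) (hki.const_mul _)
      (Filter.Eventually.of_forall fun x => mul_nonneg (by positivity) (hk0 x)),
      integral_const_mul, ← hq] at e3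
  have e4 := e2.trans e3
  have e5 : 4 * ‖v‖ ^ 3 * (q * ‖v‖) = ‖v‖ ^ 4 * q + 3 * ‖v‖ ^ 4 * q := by ring
  rw [e5, ENNReal.ofReal_add (by positivity) (by positivity)] at e4
  exact (ENNReal.add_le_add_iff_right ENNReal.ofReal_ne_top).1 e4

lemma add_pow4 {a b : ℝ} (ha : 0 ≤ a) (hb : 0 ≤ b) : (a + b) ^ 4 ≤ 8 * (a ^ 4 + b ^ 4) := by
  have h1 : (a + b) ^ 2 ≤ 2 * (a ^ 2 + b ^ 2) := by nlinarith [sq_nonneg (a - b)]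
  have h2 : ((a + b) ^ 2) ^ 2 ≤ (2 * (a ^ 2 + b ^ 2)) ^ 2 := by gcongr
  nlinarith [sq_nonneg (a ^ 2 - b ^ 2)]

lemma w_bound {σ : ℝ} (hσ : 0 < σ) (hs : 0 < s) (hm0 : 0 < m) (hm1 : m ≤ 1)
    (hrel : s ^ 2 = σ ^ 2 * (1 - m ^ 2)) (x y : EuclideanSpace ℝ (Fin d)) :
    ‖(-(1 / s ^ 2)) • (y - m • x) + (1 / σ ^ 2) • y‖ ^ 4 ≤
      8 * (1 / s ^ 4 * ‖s⁻¹ • (y - m • x)‖ ^ 4 + 1 / σ ^ 8 * ‖x‖ ^ 4) := by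
  have hw : (-(1 / s ^ 2)) • (y - m • x) + (1 / σ ^ 2) • y =
      (-(m ^ 2 / s)) • (s⁻¹ • (y - m • x)) + (m / σ ^ 2) • x := by
    have e : 1 / σ ^ 2 = 1 / s ^ 2 - m ^ 2 / s ^ 2 := by
      rw [← sub_div, eq_div_iff (by positivity), hrel]; field_simp
    have e' : m / σ ^ 2 = m * (1 / σ ^ 2) := by ring
    rw [e', e]
    match_scalars <;> field_simp <;> ring
  set z := s⁻¹ • (y - m • x) with hz
  have hn : ‖(-(1 / s ^ 2)) • (y - m • x) + (1 / σ ^ 2) • y‖ ≤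
      1 / s * ‖z‖ + 1 / σ ^ 2 * ‖x‖ := by
    rw [hw]
    clear_value z
    refine (norm_add_le _ _).trans ?_
    rw [norm_smul, norm_smul, norm_neg, Real.norm_of_nonneg (by positivity),
      Real.norm_of_nonneg (by positivity)]
    gcongr
    nlinarith
  calc _ ≤ (1 / s * ‖z‖ + 1 / σ ^ 2 * ‖x‖) ^ 4 := by gcongr
    _ ≤ 8 * ((1 / s * ‖z‖) ^ 4 + (1 / σ ^ 2 * ‖x‖) ^ 4) := add_pow4 (by positivity) (by positivity)
    _ = _ := by ring

lemma inner_bound {σ : ℝ} (hσ : 0 < σ) (hs : 0 < s) (x : EuclideanSpace ℝ (Fin d))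
    (hx : 0 ≤ p0 x) :
    ∫⁻ y, ENNReal.ofReal ((8 * (1 / s ^ 4 * ‖s⁻¹ • (y - m • x)‖ ^ 4 + 1 / σ ^ 8 * ‖x‖ ^ 4)) *
        (gk d s (m • x) y * p0 x)) =
      ENNReal.ofReal 8 * (ENNReal.ofReal (1 / s ^ 4) *
        (∫⁻ z, ENNReal.ofReal (‖z‖ ^ 4) ∂(stdGaussMeasure d)) * ENNReal.ofReal (p0 x) +
        ENNReal.ofReal (1 / σ ^ 8) * ENNReal.ofReal (‖x‖ ^ 4 * p0 x)) := by
  let f : EuclideanSpace ℝ (Fin d) → ℝ≥0∞ := fun z =>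
    (ENNReal.ofReal 8 * ENNReal.ofReal (p0 x)) * (ENNReal.ofReal (1 / s ^ 4) *
      ENNReal.ofReal (‖z‖ ^ 4) + ENNReal.ofReal (1 / σ ^ 8) * ENNReal.ofReal (‖x‖ ^ 4) * 1)
  have hf : Measurable f := by fun_prop
  have e : ∀ y, ENNReal.ofReal ((8 * (1 / s ^ 4 * ‖s⁻¹ • (y - m • x)‖ ^ 4 +
      1 / σ ^ 8 * ‖x‖ ^ 4)) * (gk d s (m • x) y * p0 x)) =
      f (s⁻¹ • (y - m • x)) * ENNReal.ofReal (gk d s (m • x) y) := by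
    intro y
    have hg := (gk_pos hs (m • x) y).le
    simp only [f]
    rw [ENNReal.ofReal_mul (by positivity), ENNReal.ofReal_mul (by positivity),
      ENNReal.ofReal_mul hg, ENNReal.ofReal_add (by positivity) (by positivity),
      ENNReal.ofReal_mul (by positivity), ENNReal.ofReal_mul (by positivity)]
    ring
  simp_rw [e]
  rw [lintegral_gk hs _ f hf]
  simp only [f]
  rw [lintegral_const_mul _ (by fun_prop), lintegral_add_left (by fun_prop),
    lintegral_const_mul _ (by fun_prop), lintegral_const_mul _ (by fun_prop), stdGauss_univ,
    ENNReal.ofReal_mul (by positivity)]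
  ring

lemma main_bound {σ : ℝ} (hσ : 0 < σ) (hs : 0 < s) (hm0 : 0 < m) (hm1 : m ≤ 1)
    (hrel : s ^ 2 = σ ^ 2 * (1 - m ^ 2))
    (hm : Measurable p0) (h0 : ∀ x, 0 ≤ p0 x) (hi : Integrable p0)
    (h1 : ∫ x, p0 x = 1) :
    ∫⁻ y, ENNReal.ofReal
        (‖gradient (fun y => Real.log (∫ x, gk d s (m • x) y * p0 x)) y + (1 / σ ^ 2) • y‖ ^ 4 *
          ∫ x, gk d s (m • x) y * p0 x) ≤
      ENNReal.ofReal 8 * (ENNReal.ofReal (1 / s ^ 4) *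
        ∫⁻ z, ENNReal.ofReal (‖z‖ ^ 4) ∂(stdGaussMeasure d) +
        ENNReal.ofReal (1 / σ ^ 8) * ∫⁻ x, ENNReal.ofReal (‖x‖ ^ 4 * p0 x)) := by
  have hmk := measurable_gk2 (d := d) (s := s) (m := m)
  calc _ ≤ ∫⁻ y, ∫⁻ x, ENNReal.ofReal
        ((8 * (1 / s ^ 4 * ‖s⁻¹ • (y - m • x)‖ ^ 4 + 1 / σ ^ 8 * ‖x‖ ^ 4)) *
        (gk d s (m • x) y * p0 x)) := by
        refine lintegral_mono fun y => ?_
        have hki := integrable_gk (m := m) hs hm h0 hi y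
        have hGi := integrable_G (m := m) hs hm h0 hi y
        have hq := q_pos (m := m) hs hm h0 hi h1 y
        have hk0 : ∀ x, 0 ≤ gk d s (m • x) y * p0 x :=
          fun x => mul_nonneg (gk_pos hs _ _).le (h0 x)
        have hsplit : (fun x => (gk d s (m • x) y * p0 x) •
            ((-(1 / s ^ 2)) • (y - m • x) + (1 / σ ^ 2) • y)) =
            fun x => (-(gk d s (m • x) y * p0 x / s ^ 2)) • (y - m • x) +
              (gk d s (m • x) y * p0 x) • ((1 / σ ^ 2) • y) := by
          ext1 x
          rw [smul_add, smul_smul]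
          congr 2
          ring
        refine (jensen4 (k := fun x => gk d s (m • x) y * p0 x)
          (w := fun x => (-(1 / s ^ 2)) • (y - m • x) + (1 / σ ^ 2) • y)
          ((measurable_gk1 y).mul hm) hk0 hki ?_ _ ?_).trans ?_
        · rw [hsplit]
          exact hGi.add (hki.smul_const _)
        · rw [hsplit, integral_add hGi (hki.smul_const _), integral_smul_const,
            gradient_log_q hs hm h0 hi h1, smul_add, smul_smul, mul_inv_cancel₀ hq.ne', one_smul]
        · refine lintegral_mono fun x => ENNReal.ofReal_le_ofReal ?_
          exact mul_le_mul_of_nonneg_right (w_bound hσ hs hm0 hm1 hrel x y) (hk0 x)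
    _ = ∫⁻ x, ∫⁻ y, ENNReal.ofReal
        ((8 * (1 / s ^ 4 * ‖s⁻¹ • (y - m • x)‖ ^ 4 + 1 / σ ^ 8 * ‖x‖ ^ 4)) *
        (gk d s (m • x) y * p0 x)) := by
        apply lintegral_lintegral_swap
        apply Measurable.aemeasurable
        have := hmk.comp measurable_swap
        simp only [Function.comp_def, Prod.fst_swap, Prod.snd_swap] at this
        simp only [Function.uncurry_def]
        fun_prop
    _ = _ := by
        simp_rw [fun x => inner_bound (m := m) hσ hs x (h0 x)]
        rw [lintegral_const_mul _ (by fun_prop), lintegral_add_left (by fun_prop),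
          lintegral_const_mul _ (by fun_prop), lintegral_const_mul _ (by fun_prop),
          ← ofReal_integral_eq_lintegral_ofReal hi (Filter.Eventually.of_forall h0), h1]
        simp

end main

/-- a universal (dimension-free) fourth-moment bound for the modified score
`∇ log p̃_t = ∇ log p_t + x/σ²`:
`∫ ‖∇ log p_t + x/σ²‖⁴ p_t ≤ C (σ_t⁻⁴ ∫‖z‖⁴ dγ_d + σ⁻⁸ ∫‖x‖⁴ p₀)`. -/
theorem score_fourth_moment_bound :
    ∃ C : ℝ, 0 < C ∧
      ∀ (d : ℕ), 1 ≤ d → ∀ (σ T : ℝ), 0 < σ → 0 < T →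
        ∀ β : ℝ → ℝ, ContinuousOn β (Icc 0 T) → (∀ s ∈ Icc (0:ℝ) T, 0 < β s) →
          MonotoneOn β (Icc 0 T) →
        ∀ t ∈ Ioc (0:ℝ) T,
        ∀ p0 : EuclideanSpace ℝ (Fin d) → ℝ, Measurable p0 → (∀ x, 0 ≤ p0 x) →
          Integrable p0 → (∫ x, p0 x) = 1 →
          Integrable (fun x => ‖x‖ ^ 4 * p0 x) →
          ∫⁻ x, ENNReal.ofReal
              (‖gradient (fun y => Real.log (forwardDensity d (σ ^ 2) β p0 t y)) x +
                  (1 / σ ^ 2) • x‖ ^ 4 * forwardDensity d (σ ^ 2) β p0 t x) ≤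
            ENNReal.ofReal C *
              (ENNReal.ofReal (1 / scoef (σ ^ 2) β t ^ 4) *
                  ∫⁻ z, ENNReal.ofReal (‖z‖ ^ 4) ∂(stdGaussMeasure d) +
                ENNReal.ofReal (1 / σ ^ 8) *
                  ∫⁻ x, ENNReal.ofReal (‖x‖ ^ 4 * p0 x)) := by
  refine ⟨8, by norm_num, ?_⟩
  intro d _ σ T hσ hT β hβc hβp _ t ht p0 hm h0 hi h1 _
  have hint : 0 < ∫ s in (0:ℝ)..t, β s := by
    apply intervalIntegral.intervalIntegral_pos_of_pos_on _ _ ht.1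
    · apply ContinuousOn.intervalIntegrable
      rw [uIcc_of_le ht.1.le]
      exact hβc.mono (Icc_subset_Icc_right ht.2)
    · intro x hx
      exact hβp x ⟨hx.1.le, hx.2.le.trans ht.2⟩
  have hm0 : 0 < mcoef (σ ^ 2) β t := Real.exp_pos _
  have hm1 : mcoef (σ ^ 2) β t < 1 := by
    unfold mcoef
    rw [Real.exp_lt_one_iff]
    have : 0 < 1 / (2 * σ ^ 2) * ∫ s in (0:ℝ)..t, β s := by positivity
    linarith
  have hpos : 0 < σ ^ 2 * (1 - mcoef (σ ^ 2) β t ^ 2) := by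
    apply mul_pos (by positivity)
    nlinarith
  have hs : 0 < scoef (σ ^ 2) β t := Real.sqrt_pos.2 hpos
  have hrel : scoef (σ ^ 2) β t ^ 2 = σ ^ 2 * (1 - mcoef (σ ^ 2) β t ^ 2) := Real.sq_sqrt hpos.le
  exact main_bound hσ hs hm0 hm1.le hrel hm h0 hi h1
end
end
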